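/- arXiv:2111.11917 — 10 statements merged into one kernel-verified Lean document; each statement's English description precedes it below -/
import Mathlib

section
/- Let A, V, q, M, g, g^σ be as in the context. For every point (x,ξ) ∈ ℝⁿ×ℝⁿ and every (t,τ) ∈ ℝⁿ×ℝⁿ, the supremum over (y,η) ≠ (0,0) of (t·η − y·τ)² / g_{(x,ξ)}(y,η) equals g^σ_{(x,ξ)}(t,τ) = |t|²·M(x,ξ)^{1/γ} + |τ|²·M(x,ξ)^{1/κ}. Consequently the uncertainty parameter λ_g(x,ξ) := inf over (t,τ) ≠ (0,0) of (g^σ_{(x,ξ)}(t,τ)/g_{(x,ξ)}(t,τ))^{1/2} equals M(x,ξ)^{(κ+γ)/(2κγ)}, and λ_g(x,ξ) ≥ 1 for all (x,ξ); that is, the metric g^{(A,V)} satisfies the uncertainty principle. -/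
open MeasureTheory RealInnerProductSpace
noncomputable section

/-- ℝⁿ with the Euclidean norm. -/
abbrev E (n : ℕ) : Type := EuclideanSpace ℝ (Fin n)

/-- A continuous `Γ : ℝⁿ → ℝ` is a τ-function (with parameter q). -/
def IsTauFunction {n : ℕ} (τ q : ℝ) (Γ : E n → ℝ) : Prop :=
  Continuous Γ ∧ (∀ x, 0 < Γ x + q / 4) ∧
  ∃ C₁ > (0:ℝ), ∃ R > (0:ℝ), ∀ x y : E n, R ≤ ‖x‖ → R ≤ ‖y‖ →
    C₁ * |(q / 2 + Γ x) ^ (1 / (2 * τ)) - (q / 2 + Γ y) ^ (1 / (2 * τ))| ≤ ‖x - y‖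

/-- The Hörmander metric g^{(A,V)}: g_{(x,ξ)}(t,τ') = |t|²M^{-1/κ} + |τ'|²M^{-1/γ},
where M(x,ξ) = q + V(x) + A(ξ). -/
def gMet {n : ℕ} (κ γ q : ℝ) (A V : E n → ℝ) (X T : E n × E n) : ℝ :=
  ‖T.1‖ ^ 2 * (q + V X.1 + A X.2) ^ (-(1 / κ)) +
    ‖T.2‖ ^ 2 * (q + V X.1 + A X.2) ^ (-(1 / γ))

/-- The dual form g^σ_{(x,ξ)}(t,τ') = |t|²M^{1/γ} + |τ'|²M^{1/κ}. -/
def gSig {n : ℕ} (κ γ q : ℝ) (A V : E n → ℝ) (X T : E n × E n) : ℝ :=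
  ‖T.1‖ ^ 2 * (q + V X.1 + A X.2) ^ (1 / γ) +
    ‖T.2‖ ^ 2 * (q + V X.1 + A X.2) ^ (1 / κ)

theorem aux_cs (s t u v p q' a b : ℝ) (ha : 0 < a) (hb : 0 < b)
    (hp : |p| ≤ s * v) (hq : |q'| ≤ u * t) :
    (p - q') ^ 2 ≤ (s ^ 2 * b + t ^ 2 * a) * (u ^ 2 * a⁻¹ + v ^ 2 * b⁻¹) := by
  have h1 : |p - q'| ≤ s * v + u * t := (abs_sub p q').trans (add_le_add hp hq)
  have h2 : (p - q') ^ 2 ≤ (s * v + u * t) ^ 2 := by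
    rw [← sq_abs (p - q')]
    exact pow_le_pow_left₀ (abs_nonneg _) h1 2
  have h3 : (s ^ 2 * b + t ^ 2 * a) * (u ^ 2 * a⁻¹ + v ^ 2 * b⁻¹) - (s * v + u * t) ^ 2
      = (s * u * b - t * v * a) ^ 2 / (a * b) := by
    field_simp
    ring
  have h4 : 0 ≤ (s * u * b - t * v * a) ^ 2 / (a * b) := by positivity
  linarith

theorem aux_pos {n : ℕ} (Y : E n × E n) (hY : Y ≠ 0) (a b : ℝ) (ha : 0 < a) (hb : 0 < b) :
    0 < ‖Y.1‖ ^ 2 * a + ‖Y.2‖ ^ 2 * b := by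
  by_cases h : Y.1 = 0
  · have h2 : Y.2 ≠ 0 := fun h2 => hY (Prod.ext h h2)
    have := norm_pos_iff.mpr h2
    positivity
  · have := norm_pos_iff.mpr h
    positivity

/-- the supremum over Y ≠ 0 of σ(Y,T)²/g_X(Y) equals g^σ_X(T), the
uncertainty parameter λ_g(X) = inf_{T ≠ 0} (g^σ_X(T)/g_X(T))^{1/2} equals
M(X)^{(κ+γ)/(2κγ)}, and λ_g(X) ≥ 1 for all X. -/
theorem statement0 {n : ℕ} (hn : 1 ≤ n) (κ γ q : ℝ) (hκ : 0 < κ) (hγ : 0 < γ) (hq : 0 < q)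
    (A V : E n → ℝ) (hA : IsTauFunction γ q A) (hV : IsTauFunction κ q V)
    (hM : ∀ x ξ : E n, 1 ≤ q + V x + A ξ) :
    (∀ X T : E n × E n,
      IsLUB {r : ℝ | ∃ Y : E n × E n, Y ≠ 0 ∧
          r = (⟪T.1, Y.2⟫ - ⟪Y.1, T.2⟫) ^ 2 / gMet κ γ q A V X Y}
        (gSig κ γ q A V X T)) ∧
    (∀ X : E n × E n,
      IsGLB {r : ℝ | ∃ T : E n × E n, T ≠ 0 ∧
          r = (gSig κ γ q A V X T / gMet κ γ q A V X T) ^ ((1:ℝ) / 2)}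
        ((q + V X.1 + A X.2) ^ ((κ + γ) / (2 * κ * γ)))) ∧
    (∀ X : E n × E n, 1 ≤ (q + V X.1 + A X.2) ^ ((κ + γ) / (2 * κ * γ))) := by
  have hne : ∃ Y : E n × E n, Y ≠ 0 := by
    refine ⟨(EuclideanSpace.single ⟨0, hn⟩ 1, 0), fun h => ?_⟩
    have h1 := congrArg (fun z : E n × E n => ‖z.1‖) h
    simp at h1
  refine ⟨fun X T => ?_, fun X => ?_, fun X => ?_⟩
  · have hM0 : 0 < q + V X.1 + A X.2 := lt_of_lt_of_le one_pos (hM _ _)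
    simp only [gMet, gSig, Real.rpow_neg hM0.le]
    have ha : 0 < (q + V X.1 + A X.2) ^ (1 / κ) := Real.rpow_pos_of_pos hM0 _
    have hb : 0 < (q + V X.1 + A X.2) ^ (1 / γ) := Real.rpow_pos_of_pos hM0 _
    generalize (q + V X.1 + A X.2) ^ (1 / κ) = a at *
    generalize (q + V X.1 + A X.2) ^ (1 / γ) = b at *
    constructor
    · rintro r ⟨Y, hY, rfl⟩
      rw [div_le_iff₀ (aux_pos Y hY _ _ (inv_pos.mpr ha) (inv_pos.mpr hb))]
      exact aux_cs _ _ _ _ _ _ a b ha hb (abs_real_inner_le_norm _ _) (abs_real_inner_le_norm _ _)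
    · intro u hu
      by_cases hT : T = 0
      · obtain ⟨Y, hY⟩ := hne
        have := hu ⟨Y, hY, rfl⟩
        simpa [hT] using this
      · have hp := aux_pos T hT b a hb ha
        refine hu ⟨(-(a • T.2), b • T.1), ?_, ?_⟩
        · intro h
          apply hT
          have h1 := congrArg Prod.fst h
          have h2 := congrArg Prod.snd h
          simp [ha.ne', hb.ne'] at h1 h2
          exact Prod.ext h2 h1
        · simp only [inner_neg_left, real_inner_smul_left, real_inner_smul_right,
            real_inner_self_eq_norm_sq, norm_neg, norm_smul, Real.norm_eq_abs, mul_pow, sq_abs]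
          have e : a ^ 2 * ‖T.2‖ ^ 2 * a⁻¹ + b ^ 2 * ‖T.1‖ ^ 2 * b⁻¹
              = ‖T.1‖ ^ 2 * b + ‖T.2‖ ^ 2 * a := by
            field_simp
            ring
          rw [e, eq_div_iff hp.ne']
          ring
  · have hM0 : 0 < q + V X.1 + A X.2 := lt_of_lt_of_le one_pos (hM _ _)
    have key : ∀ T : E n × E n, T ≠ 0 →
        (gSig κ γ q A V X T / gMet κ γ q A V X T) ^ ((1:ℝ) / 2)
          = (q + V X.1 + A X.2) ^ ((κ + γ) / (2 * κ * γ)) := by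
      intro T hT
      have hpos : 0 < gMet κ γ q A V X T :=
        aux_pos T hT _ _ (Real.rpow_pos_of_pos hM0 _) (Real.rpow_pos_of_pos hM0 _)
      have e : gSig κ γ q A V X T
          = (q + V X.1 + A X.2) ^ (1 / κ + 1 / γ) * gMet κ γ q A V X T := by
        have ha : 0 < (q + V X.1 + A X.2) ^ (1 / κ) := Real.rpow_pos_of_pos hM0 _
        have hb : 0 < (q + V X.1 + A X.2) ^ (1 / γ) := Real.rpow_pos_of_pos hM0 _
        simp only [gMet, gSig, Real.rpow_neg hM0.le, Real.rpow_add hM0]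
        generalize (q + V X.1 + A X.2) ^ (1 / κ) = a at *
        generalize (q + V X.1 + A X.2) ^ (1 / γ) = b at *
        field_simp
      rw [e, mul_div_assoc, div_self hpos.ne', mul_one, ← Real.rpow_mul hM0.le]
      congr 1
      field_simp
      ring
    obtain ⟨T, hT⟩ := hne
    constructor
    · rintro r ⟨T, hT, rfl⟩
      exact (key T hT).ge
    · intro u hu
      rw [← key T hT]
      exact hu ⟨T, hT, rfl⟩
  · exact Real.one_le_rpow (hM _ _) (by positivity)
end
end

section
/- Let A, V, q, M, g be as in the context. Then the metric g^{(A,V)} is slowly varying (continuous): there exists a constant C ≥ 1 such that for all X=(x,ξ) and Y=(y,η) in ℝⁿ×ℝⁿ, if g_X(X−Y) ≤ C^{-1}, then g_Y(T) ≤ C·g_X(T) for every T ∈ ℝⁿ×ℝⁿ. -/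
open MeasureTheory RealInnerProductSpace
noncomputable section

theorem tau_lip {n : ℕ} (hn : 1 ≤ n) (τ q : ℝ) (hτ : 0 < τ) (hq : 0 < q)
    (Γ : E n → ℝ) (h : IsTauFunction τ q Γ) :
    ∃ c B : ℝ, 0 < c ∧ 0 ≤ B ∧ ∀ x y : E n,
      (q / 2 + Γ x) ^ (1 / (2 * τ)) ≤ c * ‖x - y‖ + B + (q / 2 + Γ y) ^ (1 / (2 * τ)) := by
  obtain ⟨hc, hpos, C₁, hC₁, R, hR, hL⟩ := h
  set f : E n → ℝ := fun x => (q / 2 + Γ x) ^ (1 / (2 * τ)) with hf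
  have hf0 : ∀ x, 0 ≤ f x := fun x => Real.rpow_nonneg (by linarith [hpos x]) _
  have hfc : Continuous f := by
    apply Continuous.rpow_const (by fun_prop)
    intro x
    right
    positivity
  obtain ⟨B0, hB0⟩ := (isCompact_closedBall (0 : E n) R).exists_bound_of_continuousOn
    hfc.continuousOn
  have hB : ∀ x, ‖x‖ ≤ R → f x ≤ B0 := fun x hx =>
    (le_abs_self _).trans (hB0 x (by simpa using hx))
  have hB00 : 0 ≤ B0 := (hf0 0).trans (hB 0 (by simpa using hR.le))
  obtain ⟨z, hz⟩ : ∃ z : E n, ‖z‖ = R :=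
    ⟨EuclideanSpace.single (⟨0, hn⟩ : Fin n) R, by simp [abs_of_pos hR]⟩
  have hL' : ∀ x y : E n, R ≤ ‖x‖ → R ≤ ‖y‖ → f x ≤ C₁⁻¹ * ‖x - y‖ + f y := by
    intro x y hx hy
    have h1 := hL x y hx hy
    have h2 : C₁ * (f x - f y) ≤ ‖x - y‖ :=
      (mul_le_mul_of_nonneg_left (le_abs_self _) hC₁.le).trans h1
    have h3 : f x - f y ≤ C₁⁻¹ * ‖x - y‖ := by
      rw [inv_mul_eq_div, le_div_iff₀ hC₁]; linarith
    linarith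
  have hci : 0 < C₁⁻¹ := inv_pos.2 hC₁
  refine ⟨C₁⁻¹, B0 + C₁⁻¹ * (2 * R), hci, by positivity, ?_⟩
  intro x y
  change f x ≤ C₁⁻¹ * ‖x - y‖ + (B0 + C₁⁻¹ * (2 * R)) + f y
  have e1 : 0 ≤ C₁⁻¹ * ‖x - y‖ := by positivity
  have e2 : 0 ≤ C₁⁻¹ * (2 * R) := by positivity
  rcases le_total ‖x‖ R with hx | hx
  · linarith [hB x hx, hf0 y]
  · rcases le_total ‖y‖ R with hy | hy
    · have h1 := hL' x z hx hz.ge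
      have h2 := hB z hz.le
      have h3 : ‖x - z‖ ≤ ‖x - y‖ + 2 * R := by
        have := norm_sub_le_norm_sub_add_norm_sub x y z
        have := norm_sub_le y z
        linarith
      have h4 := mul_le_mul_of_nonneg_left h3 hci.le
      linarith [hf0 y]
    · linarith [hL' x y hx hy]

theorem tau_key {n : ℕ} (hn : 1 ≤ n) (τ q : ℝ) (hτ : 0 < τ) (hq : 0 < q)
    (Γ : E n → ℝ) (h : IsTauFunction τ q Γ) :
    ∃ D : ℝ, 1 ≤ D ∧ ∀ (x y : E n) (m m' : ℝ), 1 ≤ m → 1 ≤ m' →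
      m ≤ 2 * (q / 2 + Γ x) → q / 2 + Γ y ≤ m' →
      ‖x - y‖ ^ 2 * m ^ (-(1 / τ)) ≤ D⁻¹ → m ≤ D * m' := by
  obtain ⟨c, B, hc, hB, hL⟩ := tau_lip hn τ q hτ hq Γ h
  have hpos := h.2.1
  set s : ℝ := 1 / (2 * τ) with hs
  have hs0 : 0 < s := by positivity
  set P : ℝ := 2 ^ s with hP
  have hP0 : 0 < P := by positivity
  set L : ℝ := 2 * P * c + 1 with hLdef
  have hL1 : 1 ≤ L := by
    have : 0 < 2 * P * c := by positivity
    linarith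
  set K : ℝ := 2 * P * (B + 1) with hK
  have hK0 : 0 < K := by positivity
  have hKp : 0 < K ^ (2 * τ) := by positivity
  refine ⟨L ^ 2 + K ^ (2 * τ), by nlinarith, ?_⟩
  intro x y m m' hm hm' hmx hmy hN
  have hm0 : 0 < m := by linarith
  have hm'0 : 0 < m' := by linarith
  have ha : 0 < q / 2 + Γ x := by linarith [hpos x]
  have hb : 0 < q / 2 + Γ y := by linarith [hpos y]
  have hms : 0 < m ^ s := by positivity
  have hm's : 1 ≤ m' ^ s := Real.one_le_rpow hm' hs0.le
  have hsq : m ^ (-(1 / τ)) = ((m ^ s) ^ 2)⁻¹ := by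
    rw [Real.rpow_neg hm0.le, ← Real.rpow_natCast, ← Real.rpow_mul hm0.le]
    congr 2
    rw [hs]; push_cast; field_simp
  have h1 : ‖x - y‖ * L ≤ m ^ s := by
    have hD : (L ^ 2 + K ^ (2 * τ))⁻¹ ≤ (L ^ 2)⁻¹ :=
      inv_anti₀ (by positivity) (by linarith)
    have h2 := hN.trans hD
    rw [hsq, ← div_eq_mul_inv, div_le_iff₀ (by positivity), inv_mul_eq_div,
      le_div_iff₀ (by positivity), ← mul_pow] at h2
    exact le_of_sq_le_sq h2 hms.le
  have h2 : m ^ s ≤ P * (q / 2 + Γ x) ^ s := by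
    rw [hP, ← Real.mul_rpow (by norm_num) ha.le]
    exact Real.rpow_le_rpow hm0.le hmx hs0.le
  have h3 : (q / 2 + Γ y) ^ s ≤ m' ^ s := Real.rpow_le_rpow hb.le hmy hs0.le
  have h4 := mul_le_mul_of_nonneg_left (hL x y) hP0.le
  have h5 : m ^ s ≤ K * m' ^ s := by
    have e1 : 2 * P * c * ‖x - y‖ ≤ m ^ s := by
      have := norm_nonneg (x - y)
      rw [hLdef] at h1
      nlinarith
    have e2 : P * (q / 2 + Γ y) ^ s ≤ P * m' ^ s := mul_le_mul_of_nonneg_left h3 hP0.le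
    have e3 : P * B * 1 ≤ P * B * m' ^ s := mul_le_mul_of_nonneg_left hm's (by positivity)
    rw [hK]
    nlinarith
  have h6 := Real.rpow_le_rpow hms.le h5 (by positivity : 0 ≤ 2 * τ)
  have e : s * (2 * τ) = 1 := by rw [hs]; field_simp
  rw [Real.mul_rpow hK0.le (by positivity), ← Real.rpow_mul hm0.le, ← Real.rpow_mul hm'0.le, e,
    Real.rpow_one, Real.rpow_one] at h6
  nlinarith [sq_nonneg L]

theorem rpow_cmp (D m m' p : ℝ) (hD : 0 < D) (hm : 0 < m) (hm' : 0 < m') (hp : 0 < p)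
    (h : m ≤ D * m') : m' ^ (-p) ≤ D ^ p * m ^ (-p) := by
  have h1 := Real.rpow_le_rpow hm.le h hp.le
  rw [Real.mul_rpow hD.le hm'.le] at h1
  rw [Real.rpow_neg hm.le, Real.rpow_neg hm'.le, ← div_eq_mul_inv, le_div_iff₀ (by positivity),
    inv_mul_eq_div, div_le_iff₀ (by positivity)]
  exact h1

/-- the metric g^{(A,V)} is slowly varying (continuous). -/
theorem statement1 {n : ℕ} (hn : 1 ≤ n) (κ γ q : ℝ) (hκ : 0 < κ) (hγ : 0 < γ) (hq : 0 < q)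
    (A V : E n → ℝ) (hA : IsTauFunction γ q A) (hV : IsTauFunction κ q V)
    (hM : ∀ x ξ : E n, 1 ≤ q + V x + A ξ) :
    ∃ C : ℝ, 1 ≤ C ∧ ∀ X Y : E n × E n,
      gMet κ γ q A V X (X - Y) ≤ C⁻¹ →
        ∀ T : E n × E n, gMet κ γ q A V Y T ≤ C * gMet κ γ q A V X T := by
  obtain ⟨D1, hD1, k1⟩ := tau_key hn κ q hκ hq V hV
  obtain ⟨D2, hD2, k2⟩ := tau_key hn γ q hγ hq A hA
  have hD : 0 < D1 + D2 := by linarith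
  have p1 : 0 < (D1 + D2) ^ (1 / κ) := by positivity
  have p2 : 0 < (D1 + D2) ^ (1 / γ) := by positivity
  refine ⟨D1 + D2 + (D1 + D2) ^ (1 / κ) + (D1 + D2) ^ (1 / γ), by linarith, ?_⟩
  rintro ⟨x, ξ⟩ ⟨y, η⟩ hXY ⟨t, u⟩
  simp only [gMet, Prod.mk_sub_mk] at hXY ⊢
  have hm := hM x ξ
  have hm' := hM y η
  have a1 := hV.2.1 x
  have a2 := hV.2.1 y
  have b1 := hA.2.1 ξ
  have b2 := hA.2.1 η
  set m := q + V x + A ξ with hmd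
  set m' := q + V y + A η with hmd'
  have hm0 : 0 < m := by linarith
  have hm'0 : 0 < m' := by linarith
  have n1 : 0 ≤ ‖x - y‖ ^ 2 * m ^ (-(1 / κ)) := by positivity
  have n2 : 0 ≤ ‖ξ - η‖ ^ 2 * m ^ (-(1 / γ)) := by positivity
  have key : m ≤ (D1 + D2) * m' := by
    rcases le_total (A ξ) (V x) with hc | hc
    · have := k1 x y m m' hm hm' (by linarith) (by linarith) (by
        refine le_trans (by linarith) (hXY.trans (inv_anti₀ (by linarith) (by linarith))))
      nlinarith
    · have := k2 ξ η m m' hm hm' (by linarith) (by linarith) (by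
        refine le_trans (by linarith) (hXY.trans (inv_anti₀ (by linarith) (by linarith))))
      nlinarith
  have c1 := rpow_cmp _ m m' (1 / κ) hD hm0 hm'0 (by positivity) key
  have c2 := rpow_cmp _ m m' (1 / γ) hD hm0 hm'0 (by positivity) key
  have r1 : 0 < m ^ (-(1 / κ)) := by positivity
  have r2 : 0 < m ^ (-(1 / γ)) := by positivity
  set C := D1 + D2 + (D1 + D2) ^ (1 / κ) + (D1 + D2) ^ (1 / γ) with hC
  have d1 : m' ^ (-(1 / κ)) ≤ C * m ^ (-(1 / κ)) :=
    c1.trans (mul_le_mul_of_nonneg_right (by linarith) r1.le)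
  have d2 : m' ^ (-(1 / γ)) ≤ C * m ^ (-(1 / γ)) :=
    c2.trans (mul_le_mul_of_nonneg_right (by linarith) r2.le)
  have f1 := mul_le_mul_of_nonneg_left d1 (sq_nonneg ‖t‖)
  have f2 := mul_le_mul_of_nonneg_left d2 (sq_nonneg ‖u‖)
  linarith
end
end

section
/- Let A, V, q, M be as in the context. Then there exists a constant C > 0 such that for all x, y, ξ, η ∈ ℝⁿ: if |x−y| ≤ C^{-1}·M(x,ξ)^{1/(2κ)} and |ξ−η| ≤ C^{-1}·M(x,ξ)^{1/(2γ)}, then M(x,ξ) ≤ C·M(y,η), i.e. (q+V(x)+A(ξ))/(q+V(y)+A(η)) ≤ C. -/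
open MeasureTheory RealInnerProductSpace
noncomputable section

theorem aux_lip {n : ℕ} (τ q : ℝ) (hτ : 0 < τ) (Γ : E n → ℝ) (h : IsTauFunction τ q Γ) (hq : 0 < q) :
    ∃ L > (0:ℝ), ∃ B > (0:ℝ), ∀ x y : E n,
      (q / 2 + Γ x) ^ (1 / (2 * τ)) ≤ (q / 2 + Γ y) ^ (1 / (2 * τ)) + L * ‖x - y‖ + B := by
  obtain ⟨hc, hpos, C₁, hC₁, R, hR, hl⟩ := h
  have hp : ∀ x, 0 < q / 2 + Γ x := fun x => by linarith [hpos x]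
  have hfc : Continuous (fun x => (q / 2 + Γ x) ^ (1 / (2 * τ))) :=
    (continuous_const.add hc).rpow_const (fun x => Or.inl (hp x).ne')
  have hf0 : ∀ x, 0 ≤ (q / 2 + Γ x) ^ (1 / (2 * τ)) := fun x => (Real.rpow_pos_of_pos (hp x) _).le
  obtain ⟨K, hK⟩ := (isCompact_closedBall (0 : E n) R).bddAbove_image hfc.continuousOn
  have hK' : ∀ x : E n, ‖x‖ ≤ R → (q / 2 + Γ x) ^ (1 / (2 * τ)) ≤ K := fun x hx =>
    hK ⟨x, by simpa using hx, rfl⟩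
  generalize hf : (fun x => (q / 2 + Γ x) ^ (1 / (2 * τ))) = f at *
  have hfx : ∀ x, (q / 2 + Γ x) ^ (1 / (2 * τ)) = f x := fun x => by rw [← hf]
  simp only [hfx] at *
  have hK0 : 0 ≤ K := (hf0 0).trans (hK' 0 (by simpa using hR.le))
  have hl' : ∀ x y : E n, R ≤ ‖x‖ → R ≤ ‖y‖ → f x ≤ f y + C₁⁻¹ * ‖x - y‖ := by
    intro x y hx hy
    have h1 := hl x y hx hy
    have h2 : |f x - f y| ≤ C₁⁻¹ * ‖x - y‖ := by
      rw [inv_mul_eq_div, le_div_iff₀ hC₁]; linarith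
    linarith [le_abs_self (f x - f y)]
  have hi : 0 < C₁⁻¹ := inv_pos.mpr hC₁
  refine ⟨C₁⁻¹, hi, K + C₁⁻¹ * (2 * R), by positivity, fun x y => ?_⟩
  have hn0 : 0 ≤ C₁⁻¹ * ‖x - y‖ := by positivity
  have hn1 : 0 ≤ C₁⁻¹ * (2 * R) := by positivity
  rcases le_total ‖x‖ R with hx | hx
  · linarith [hK' x hx, hf0 y]
  rcases le_total R ‖y‖ with hy | hy
  · linarith [hl' x y hx hy]
  have hx0 : 0 < ‖x‖ := hR.trans_le hx
  have hz : ‖(R / ‖x‖) • x‖ = R := by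
    rw [norm_smul, Real.norm_of_nonneg (by positivity)]; field_simp
  generalize (R / ‖x‖) • x = z at hz
  have h1 := hl' x z hx hz.ge
  have h2 : ‖x - z‖ ≤ ‖x - y‖ + 2 * R := by
    have := norm_sub_le_norm_sub_add_norm_sub x y z
    have := norm_sub_le y z
    linarith
  have h3 := mul_le_mul_of_nonneg_left h2 hi.le
  linarith [hK' z hz.le, hf0 y]

theorem aux_key {n : ℕ} (τ q : ℝ) (hτ : 0 < τ) (Γ : E n → ℝ) (h : IsTauFunction τ q Γ) (hq : 0 < q) :
    ∃ C₀ > (0:ℝ), ∀ C ≥ C₀, ∀ (x y : E n) (M N : ℝ), 1 ≤ N → 0 < M → M ≤ 2 * (q / 2 + Γ x) →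
      q / 2 + Γ y ≤ N → ‖x - y‖ ≤ C⁻¹ * M ^ (1 / (2 * τ)) → M ≤ C * N := by
  obtain ⟨L, hL, B, hB, hl⟩ := aux_lip τ q hτ Γ h hq
  have hs : 0 < 1 / (2 * τ) := by positivity
  generalize 1 / (2 * τ) = s at *
  have h2s : 0 < (2:ℝ) ^ s := by positivity
  have hD : 0 < 2 + 2 * B := by positivity
  refine ⟨2 * L * 2 ^ s + 2 * (2 + 2 * B) ^ s⁻¹, by positivity, ?_⟩
  intro C hC x y M N hN hM0 hMx hyN hxy
  have hN0 : 0 < N := by linarith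
  have hDs : 0 < (2 + 2 * B) ^ s⁻¹ := by positivity
  have hC1 : 2 * L * 2 ^ s ≤ C := by linarith
  have hC2 : 2 * (2 + 2 * B) ^ s⁻¹ ≤ C := by
    have : 0 < 2 * L * 2 ^ s := by positivity
    linarith
  have hC0 : 0 < C := by linarith
  have hp : ∀ x, 0 < q / 2 + Γ x := fun x => by linarith [h.2.1 x]
  have e1 : M ^ s ≤ 2 ^ s * (q / 2 + Γ x) ^ s := by
    rw [← Real.mul_rpow (by norm_num) (hp x).le]
    exact Real.rpow_le_rpow hM0.le hMx hs.le
  have e2 : (q / 2 + Γ y) ^ s ≤ N ^ s := Real.rpow_le_rpow (hp y).le hyN hs.le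
  have e3 : 1 ≤ N ^ s := Real.one_le_rpow hN hs.le
  have e4 := hl x y
  have hxs : 0 < (q / 2 + Γ x) ^ s := Real.rpow_pos_of_pos (hp x) _
  have e5 : L * ‖x - y‖ ≤ (q / 2 + Γ x) ^ s / 2 := by
    calc L * ‖x - y‖ ≤ L * (C⁻¹ * (2 ^ s * (q / 2 + Γ x) ^ s)) := by gcongr; exact hxy.trans (by gcongr)
      _ = (2 * L * 2 ^ s) * C⁻¹ * ((q / 2 + Γ x) ^ s / 2) := by ring
      _ ≤ C * C⁻¹ * ((q / 2 + Γ x) ^ s / 2) := by gcongr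
      _ = _ := by rw [mul_inv_cancel₀ hC0.ne', one_mul]
  have e6 : (q / 2 + Γ x) ^ s ≤ (2 + 2 * B) * N ^ s := by nlinarith
  have e7 : (q / 2 + Γ x) ^ s ≤ ((2 + 2 * B) ^ s⁻¹ * N) ^ s := by
    rwa [Real.mul_rpow hDs.le hN0.le, Real.rpow_inv_rpow hD.le hs.ne']
  have e8 := (Real.rpow_le_rpow_iff (hp x).le (by positivity) hs).1 e7
  calc M ≤ 2 * (2 + 2 * B) ^ s⁻¹ * N := by linarith
    _ ≤ C * N := by gcongr

/-- closeness of (x,ξ) and (y,η) relative to g implies comparability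
of M(x,ξ) = q+V(x)+A(ξ) and M(y,η). -/
theorem statement2 {n : ℕ} (hn : 1 ≤ n) (κ γ q : ℝ) (hκ : 0 < κ) (hγ : 0 < γ) (hq : 0 < q)
    (A V : E n → ℝ) (hA : IsTauFunction γ q A) (hV : IsTauFunction κ q V)
    (hM : ∀ x ξ : E n, 1 ≤ q + V x + A ξ) :
    ∃ C > (0:ℝ), ∀ x y ξ η : E n,
      ‖x - y‖ ≤ C⁻¹ * (q + V x + A ξ) ^ (1 / (2 * κ)) →
      ‖ξ - η‖ ≤ C⁻¹ * (q + V x + A ξ) ^ (1 / (2 * γ)) →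
        q + V x + A ξ ≤ C * (q + V y + A η) := by
  obtain ⟨C₁, h1, k1⟩ := aux_key κ q hκ V hV hq
  obtain ⟨C₂, h2, k2⟩ := aux_key γ q hγ A hA hq
  refine ⟨max C₁ C₂, lt_max_of_lt_left h1, fun x y ξ η hx hξ => ?_⟩
  have a1 := hM x ξ
  have a2 := hM y η
  have a3 := hV.2.1 y
  have a4 := hA.2.1 η
  rcases le_total (V x) (A ξ) with hc | hc
  · exact k2 _ (le_max_right _ _) ξ η _ _ a2 (by linarith) (by linarith) (by linarith) hξ
  · exact k1 _ (le_max_left _ _) x y _ _ a2 (by linarith) (by linarith) (by linarith) hx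
end
end

section
/- Let A, V, q, M, g, g^σ be as in the context. Then the metric g^{(A,V)} is temperate: there exist a constant C > 0 and an integer J ≥ 1 such that for all X=(x,ξ), Y=(y,η) and all T ∈ ℝⁿ×ℝⁿ, both g_X(T) ≤ C·g_Y(T)·(1+g^σ_Y(X−Y))^J and g_Y(T) ≤ C·g_X(T)·(1+g^σ_Y(X−Y))^J hold. -/
open MeasureTheory RealInnerProductSpace
noncomputable section

theorem tau_aux {n : ℕ} (hn : 1 ≤ n) {τ q : ℝ} (hτ : 0 < τ) (hq : 0 < q) {Γ : E n → ℝ}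
    (h : IsTauFunction τ q Γ) :
    ∃ K : ℝ, 1 ≤ K ∧ ∀ x y : E n,
      q / 2 + Γ x ≤ K * (q / 2 + Γ y) * (1 + ‖x - y‖) ^ (2 * τ) := by
  obtain ⟨hc, hpos, C₁, hC₁, R, hR, hL⟩ := h
  set p : ℝ := 1 / (2 * τ) with hp
  have hp0 : 0 < p := by positivity
  have hpos2 : ∀ x, 0 < q / 2 + Γ x := fun x => by have := hpos x; linarith
  set f : E n → ℝ := fun x => (q / 2 + Γ x) ^ p with hf
  have hfc : Continuous f := by
    refine Continuous.rpow_const (by fun_prop) (fun x => Or.inr hp0.le)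
  set e : E n := EuclideanSpace.single (⟨0, hn⟩ : Fin n) R with he
  have hen : ‖e‖ = R := by simp [he, abs_of_pos hR]
  obtain ⟨B, hB⟩ := (isCompact_closedBall (0 : E n) R).exists_bound_of_continuousOn
    (f := fun x => f x - f e) (by fun_prop)
  have hB0 : 0 ≤ B := (norm_nonneg _).trans (hB e (by simp [hen]))
  have hex : ∀ x : E n, ∃ x' : E n, R ≤ ‖x'‖ ∧ |f x - f x'| ≤ B ∧ ‖x - x'‖ ≤ 2 * R := by
    intro x
    by_cases hx : R ≤ ‖x‖
    · exact ⟨x, hx, by simpa using hB0, by simpa using hR.le⟩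
    · push Not at hx
      refine ⟨e, hen.ge, ?_, ?_⟩
      · have := hB x (by simpa using hx.le)
        simpa [Real.norm_eq_abs] using this
      · have := norm_sub_le x e
        linarith
  set D : ℝ := 2 * B + C₁⁻¹ * (1 + 4 * R) with hD
  have hD0 : 0 < D := by positivity
  have hfl : ∀ x y : E n, f x ≤ f y + D * (1 + ‖x - y‖) := by
    intro x y
    obtain ⟨x', hx1, hx2, hx3⟩ := hex x
    obtain ⟨y', hy1, hy2, hy3⟩ := hex y
    have h1 : C₁ * |f x' - f y'| ≤ ‖x' - y'‖ := hL x' y' hx1 hy1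
    have h2 : |f x' - f y'| ≤ C₁⁻¹ * ‖x' - y'‖ := by
      rw [inv_mul_eq_div, le_div_iff₀ hC₁]; linarith
    have h3 : ‖x' - y'‖ ≤ ‖x - y‖ + 4 * R := by
      have e1 : x' - y' = (x - y) - (x - x') + (y - y') := by abel
      rw [e1]
      have := norm_add_le ((x - y) - (x - x')) (y - y')
      have := norm_sub_le (x - y) (x - x')
      linarith
    have h4 : C₁⁻¹ * ‖x' - y'‖ ≤ C₁⁻¹ * (‖x - y‖ + 4 * R) := by gcongr
    have h5 : 0 ≤ B * ‖x - y‖ := by positivity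
    have h6 : 0 ≤ C₁⁻¹ * (4 * R * ‖x - y‖) := by positivity
    have a1 := (abs_le.1 hx2).2
    have a2 := (abs_le.1 hy2).1
    have a3 := (abs_le.1 h2).2
    have h7 : 0 < C₁⁻¹ := by positivity
    rw [hD]
    linarith
  set m : ℝ := (q / 4) ^ p with hm
  have hm0 : 0 < m := by positivity
  have hfm : ∀ y, m ≤ f y := by
    intro y
    refine Real.rpow_le_rpow (by positivity) ?_ hp0.le
    have := hpos y; linarith
  have hK0 : 1 ≤ 1 + D / m := by
    have : 0 < D / m := by positivity
    linarith
  refine ⟨(1 + D / m) ^ (2 * τ), Real.one_le_rpow hK0 (by positivity), ?_⟩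
  intro x y
  have ht := norm_nonneg (x - y)
  have h1 : f x ≤ f y * (1 + D / m) * (1 + ‖x - y‖) := by
    have h2 : D ≤ f y * (D / m) := by
      calc D = m * (D / m) := by field_simp
        _ ≤ _ := by gcongr; exact hfm y
    have h3 := hfl x y
    have h4 : D * (1 + ‖x - y‖) ≤ f y * (D / m) * (1 + ‖x - y‖) := by gcongr
    have h5 : 0 ≤ f y * ‖x - y‖ := mul_nonneg (hm0.le.trans (hfm y)) ht
    nlinarith
  have hinv : ∀ z, f z ^ (2 * τ) = q / 2 + Γ z := by
    intro z
    rw [hf]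
    simp only
    rw [← Real.rpow_mul (hpos2 z).le, hp, one_div_mul_cancel (by positivity), Real.rpow_one]
  have hfy : 0 ≤ f y := hm0.le.trans (hfm y)
  have h2 := Real.rpow_le_rpow (hm0.le.trans (hfm x)) h1 (z := 2 * τ) (by positivity)
  rw [Real.mul_rpow (by positivity) (by positivity), Real.mul_rpow hfy (by positivity),
    hinv, hinv] at h2
  linarith [h2, mul_comm (q / 2 + Γ y) ((1 + D / m) ^ (2 * τ))]

theorem neg_pow_aux {M N L a s : ℝ} (hM : 0 < M) (hN : 0 < N) (hL : 1 ≤ L) (h : N ≤ L * M)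
    (ha : 0 ≤ a) (has : a ≤ s) : M ^ (-a) ≤ L ^ s * N ^ (-a) := by
  have hL0 : 0 < L := by linarith
  have h1 : N ^ a ≤ L ^ s * M ^ a := by
    calc N ^ a ≤ (L * M) ^ a := Real.rpow_le_rpow hN.le h ha
      _ = L ^ a * M ^ a := Real.mul_rpow hL0.le hM.le
      _ ≤ _ := by gcongr
  rw [Real.rpow_neg hM.le, Real.rpow_neg hN.le]
  have hMa : 0 < M ^ a := by positivity
  have hNa : 0 < N ^ a := by positivity
  rw [← div_eq_mul_inv, le_div_iff₀ hNa, inv_mul_le_iff₀ hMa]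
  linarith

/-- the metric g^{(A,V)} is temperate. -/
theorem statement3 {n : ℕ} (hn : 1 ≤ n) (κ γ q : ℝ) (hκ : 0 < κ) (hγ : 0 < γ) (hq : 0 < q)
    (A V : E n → ℝ) (hA : IsTauFunction γ q A) (hV : IsTauFunction κ q V)
    (hM : ∀ x ξ : E n, 1 ≤ q + V x + A ξ) :
    ∃ C > (0:ℝ), ∃ J : ℕ, 1 ≤ J ∧ ∀ X Y T : E n × E n,
      gMet κ γ q A V X T ≤
          C * gMet κ γ q A V Y T * (1 + gSig κ γ q A V Y (X - Y)) ^ J ∧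
      gMet κ γ q A V Y T ≤
          C * gMet κ γ q A V X T * (1 + gSig κ γ q A V Y (X - Y)) ^ J := by
  obtain ⟨K₁, hK₁, h₁⟩ := tau_aux hn hγ hq hA
  obtain ⟨K₂, hK₂, h₂⟩ := tau_aux hn hκ hq hV
  set K := K₁ + K₂ with hK
  set p : ℝ := 2 * γ + 2 * κ with hp
  set s : ℝ := 1 / κ + 1 / γ with hs
  have hκi : 0 < 1 / κ := by positivity
  have hγi : 0 < 1 / γ := by positivity
  refine ⟨(K * 2 ^ p) ^ s, by positivity, ⌈p * s⌉₊ + 1, by omega, ?_⟩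
  intro X Y T
  set G := 1 + gSig κ γ q A V Y (X - Y) with hG
  have hMY := hM Y.1 Y.2
  have hMX := hM X.1 X.2
  have e1 : 1 ≤ (q + V Y.1 + A Y.2) ^ (1 / γ) := Real.one_le_rpow hMY hγi.le
  have e2 : 1 ≤ (q + V Y.1 + A Y.2) ^ (1 / κ) := Real.one_le_rpow hMY hκi.le
  have hsum : ‖X.1 - Y.1‖ ^ 2 + ‖X.2 - Y.2‖ ^ 2 ≤ gSig κ γ q A V Y (X - Y) := by
    unfold gSig
    simp only [Prod.fst_sub, Prod.snd_sub]
    have := le_mul_of_one_le_right (sq_nonneg ‖X.1 - Y.1‖) e1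
    have := le_mul_of_one_le_right (sq_nonneg ‖X.2 - Y.2‖) e2
    linarith
  have hG1 : 1 ≤ G := by
    have := sq_nonneg ‖X.1 - Y.1‖
    have := sq_nonneg ‖X.2 - Y.2‖
    linarith
  have hd1 : 1 + ‖X.1 - Y.1‖ ≤ 2 * G := by
    nlinarith [sq_nonneg (‖X.1 - Y.1‖ - 1), sq_nonneg ‖X.2 - Y.2‖]
  have hd2 : 1 + ‖X.2 - Y.2‖ ≤ 2 * G := by
    nlinarith [sq_nonneg (‖X.2 - Y.2‖ - 1), sq_nonneg ‖X.1 - Y.1‖]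
  have hAp : ∀ z, 0 < q / 2 + A z := fun z => by have := hA.2.1 z; linarith
  have hVp : ∀ z, 0 < q / 2 + V z := fun z => by have := hV.2.1 z; linarith
  set L := K * (2 * G) ^ p with hL
  have hG2 : 1 ≤ (2 * G) ^ p := Real.one_le_rpow (by linarith) (by positivity)
  have hL1 : 1 ≤ L := by
    rw [hL]; nlinarith
  have key : ∀ Z W : E n × E n, ‖Z.1 - W.1‖ = ‖X.1 - Y.1‖ → ‖Z.2 - W.2‖ = ‖X.2 - Y.2‖ →
      q + V Z.1 + A Z.2 ≤ L * (q + V W.1 + A W.2) := by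
    intro Z W hz1 hz2
    have a1 := h₁ Z.2 W.2
    have a2 := h₂ Z.1 W.1
    rw [hz2] at a1
    rw [hz1] at a2
    have b1 : (1 + ‖X.2 - Y.2‖) ^ (2 * γ) ≤ (2 * G) ^ p :=
      (Real.rpow_le_rpow (by positivity) hd2 (by positivity)).trans
        (Real.rpow_le_rpow_of_exponent_le (by linarith) (by linarith))
    have b2 : (1 + ‖X.1 - Y.1‖) ^ (2 * κ) ≤ (2 * G) ^ p :=
      (Real.rpow_le_rpow (by positivity) hd1 (by positivity)).trans
        (Real.rpow_le_rpow_of_exponent_le (by linarith) (by linarith))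
    have wA := hAp W.2
    have wV := hVp W.1
    have c1 : K₁ * (q / 2 + A W.2) * (1 + ‖X.2 - Y.2‖) ^ (2 * γ)
        ≤ K * (q / 2 + A W.2) * (2 * G) ^ p := by
      gcongr
      linarith
    have c2 : K₂ * (q / 2 + V W.1) * (1 + ‖X.1 - Y.1‖) ^ (2 * κ)
        ≤ K * (q / 2 + V W.1) * (2 * G) ^ p := by
      gcongr
      linarith
    calc q + V Z.1 + A Z.2 = (q / 2 + V Z.1) + (q / 2 + A Z.2) := by ring
      _ ≤ K * (q / 2 + V W.1) * (2 * G) ^ p + K * (q / 2 + A W.2) * (2 * G) ^ p := by linarith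
      _ = _ := by rw [hL]; ring
  have hLs : L ^ s ≤ (K * 2 ^ p) ^ s * G ^ (⌈p * s⌉₊ + 1) := by
    have hG0 : 0 ≤ G := by linarith
    rw [hL, Real.mul_rpow (by norm_num) hG0, ← mul_assoc,
      Real.mul_rpow (by positivity) (by positivity), ← Real.rpow_mul hG0, ← Real.rpow_natCast]
    gcongr
    push_cast
    linarith [Nat.le_ceil (p * s)]
  have fin : ∀ Z W : E n × E n, q + V W.1 + A W.2 ≤ L * (q + V Z.1 + A Z.2) →
      gMet κ γ q A V Z T ≤ (K * 2 ^ p) ^ s * gMet κ γ q A V W T * G ^ (⌈p * s⌉₊ + 1) := by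
    intro Z W hZW
    have pZ : 0 < q + V Z.1 + A Z.2 := by linarith [hM Z.1 Z.2]
    have pW : 0 < q + V W.1 + A W.2 := by linarith [hM W.1 W.2]
    have a1 := neg_pow_aux pZ pW hL1 hZW hκi.le (s := s) (by linarith)
    have a2 := neg_pow_aux pZ pW hL1 hZW hγi.le (s := s) (by linarith)
    have hW0 : 0 ≤ gMet κ γ q A V W T := by unfold gMet; positivity
    have a3 : gMet κ γ q A V Z T ≤ L ^ s * gMet κ γ q A V W T := by
      unfold gMet
      have b1 := mul_le_mul_of_nonneg_left a1 (sq_nonneg ‖T.1‖)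
      have b2 := mul_le_mul_of_nonneg_left a2 (sq_nonneg ‖T.2‖)
      linarith
    have a4 := mul_le_mul_of_nonneg_right hLs hW0
    linarith
  exact ⟨fin X Y (key Y X (norm_sub_rev _ _) (norm_sub_rev _ _)), fin Y X (key X Y rfl rfl)⟩
end
end

section
/- Let A, V, q, M be as in the context. Then there exist a constant C > 0 and an integer N ≥ 1 such that for all x, y, ξ, η ∈ ℝⁿ: (q+V(y)+A(η))^{1/(2κ)} ≤ C·(q+V(x)+A(ξ))^{1/(2κ)}·(2 + (q+V(x)+A(ξ))^{1/(2γ)}·|x−y| + (q+V(x)+A(ξ))^{1/(2κ)}·|ξ−η|)^N. -/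
open MeasureTheory RealInnerProductSpace
noncomputable section

theorem tau_growth {n : ℕ} (hn : 1 ≤ n) (τ q : ℝ) (hτ : 0 < τ) (hq : 0 < q)
    (Γ : E n → ℝ) (h : IsTauFunction τ q Γ) :
    ∃ L > (0:ℝ), ∀ x y : E n, ∀ M D : ℝ, 1 ≤ M → 1 ≤ D → q / 2 + Γ x ≤ M →
      1 + ‖x - y‖ ≤ D → q / 2 + Γ y ≤ L * M * D ^ (2 * τ) := by
  obtain ⟨hc, hpos, C, hC, R, hR, hL⟩ := h
  have hpos' : ∀ x, 0 < q / 2 + Γ x := fun x => by have := hpos x; linarith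
  have hp : 0 < 1 / (2 * τ) := by positivity
  set f : E n → ℝ := fun x => (q / 2 + Γ x) ^ (1 / (2 * τ)) with hf
  have hf0 : ∀ x, 0 < f x := fun x => Real.rpow_pos_of_pos (hpos' x) _
  have hfc : Continuous f := by
    refine Continuous.rpow_const (by fun_prop) (fun x => Or.inl (hpos' x).ne')
  obtain ⟨B, hB⟩ := (isCompact_closedBall (0 : E n) R).exists_bound_of_continuousOn
    hfc.continuousOn
  have hB' : ∀ x : E n, ‖x‖ ≤ R → f x ≤ B := fun x hx =>
    (le_abs_self _).trans (hB x (by simpa using hx))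
  have hB0 : 0 < B := (hf0 0).trans_le (hB' 0 (by simpa using hR.le))
  have hL' : ∀ x y : E n, R ≤ ‖x‖ → R ≤ ‖y‖ → f y ≤ f x + ‖x - y‖ / C := by
    intro x y hx hy
    have h1 := hL x y hx hy
    have h2 : |f x - f y| ≤ ‖x - y‖ / C := by
      rw [le_div_iff₀ hC, mul_comm]; exact h1
    have := (abs_le.1 h2).1
    linarith
  have key : ∀ x y : E n, f y ≤ f x + (B + (2 * R + ‖x - y‖) / C) := by
    intro x y
    have hx0 := hf0 x
    have hnn := norm_nonneg (x - y)
    have hq0 : 0 ≤ (2 * R + ‖x - y‖) / C := by positivity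
    rcases le_total ‖y‖ R with hy | hy
    · have := hB' y hy
      linarith
    rcases le_total R ‖x‖ with hx | hx
    · have := hL' x y hx hy
      have : ‖x - y‖ / C ≤ (2 * R + ‖x - y‖) / C := by gcongr; linarith
      linarith
    · have hy0 : ‖y‖ ≠ 0 := by linarith
      obtain ⟨z, hz⟩ : ∃ z : E n, ‖z‖ = R :=
        ⟨(R / ‖y‖) • y, by
          rw [norm_smul, norm_div, norm_norm, Real.norm_of_nonneg hR.le]; field_simp⟩
      have h1 := hL' z y hz.ge hy
      have h2 := hB' z hz.le
      have h3 : ‖z - y‖ ≤ 2 * R + ‖x - y‖ := by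
        have a := norm_sub_le_norm_sub_add_norm_sub z x y
        have b := norm_sub_le z x
        linarith
      have : ‖z - y‖ / C ≤ (2 * R + ‖x - y‖) / C := by gcongr
      linarith
  set K : ℝ := 1 + B + (2 * R + 1) / C with hK
  have hK0 : 0 < K := by positivity
  refine ⟨K ^ (2 * τ), by positivity, fun x y M D hM hD hxM hxy => ?_⟩
  have hM0 : 0 < M := by linarith
  have hD0 : 0 < D := by linarith
  set m := M ^ (1 / (2 * τ)) with hm
  have hm1 : 1 ≤ m := Real.one_le_rpow hM hp.le
  have hfx : f x ≤ m := Real.rpow_le_rpow (hpos' x).le hxM hp.le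
  have hmD : 1 ≤ m * D := one_le_mul_of_one_le_of_one_le hm1 hD
  have hm_le : m ≤ m * D := le_mul_of_one_le_right (by linarith) hD
  have hD_le : D ≤ m * D := le_mul_of_one_le_left hD0.le hm1
  have h1 : (2 * R + ‖x - y‖) / C ≤ (2 * R + 1) / C * (m * D) := by
    rw [div_mul_eq_mul_div]
    gcongr
    nlinarith
  have h2 : f y ≤ K * (m * D) := by
    have := key x y
    have h3 : B ≤ B * (m * D) := le_mul_of_one_le_right hB0.le hmD
    rw [hK]; linarith
  have h3 : f y ^ (2 * τ) ≤ (K * (m * D)) ^ (2 * τ) :=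
    Real.rpow_le_rpow (hf0 y).le h2 (by positivity)
  have e1 : f y ^ (2 * τ) = q / 2 + Γ y := by
    rw [hf]; simp only
    rw [← Real.rpow_mul (hpos' y).le, one_div, inv_mul_cancel₀ (by positivity), Real.rpow_one]
  have e2 : m ^ (2 * τ) = M := by
    rw [hm, ← Real.rpow_mul hM0.le, one_div, inv_mul_cancel₀ (by positivity), Real.rpow_one]
  rw [Real.mul_rpow hK0.le (by positivity), Real.mul_rpow (by positivity) hD0.le, e1, e2] at h3
  linarith

/-- the key temperateness inequality for M^{1/(2κ)}. -/
theorem statement4 {n : ℕ} (hn : 1 ≤ n) (κ γ q : ℝ) (hκ : 0 < κ) (hγ : 0 < γ) (hq : 0 < q)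
    (A V : E n → ℝ) (hA : IsTauFunction γ q A) (hV : IsTauFunction κ q V)
    (hM : ∀ x ξ : E n, 1 ≤ q + V x + A ξ) :
    ∃ C > (0:ℝ), ∃ N : ℕ, 1 ≤ N ∧ ∀ x y ξ η : E n,
      (q + V y + A η) ^ (1 / (2 * κ)) ≤
        C * (q + V x + A ξ) ^ (1 / (2 * κ)) *
          (2 + (q + V x + A ξ) ^ (1 / (2 * γ)) * ‖x - y‖ +
            (q + V x + A ξ) ^ (1 / (2 * κ)) * ‖ξ - η‖) ^ N := by
  obtain ⟨L₁, hL₁, h₁⟩ := tau_growth hn γ q hγ hq A hA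
  obtain ⟨L₂, hL₂, h₂⟩ := tau_growth hn κ q hκ hq V hV
  have hp : 0 < 1 / (2 * κ) := by positivity
  refine ⟨(L₁ + L₂) ^ (1 / (2 * κ)), by positivity,
    ⌈(2 * κ + 2 * γ) * (1 / (2 * κ))⌉₊, Nat.one_le_ceil_iff.2 (by positivity), ?_⟩
  intro x y ξ η
  have hM1 := hM x ξ
  have hVx := hV.2.1 x
  have hAξ := hA.2.1 ξ
  have hM2 := hM y η
  set M := q + V x + A ξ with hMdef
  have hM0 : 0 < M := by linarith
  have a1 : 1 ≤ M ^ (1 / (2 * γ)) := Real.one_le_rpow hM1 (by positivity)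
  have a2 : 1 ≤ M ^ (1 / (2 * κ)) := Real.one_le_rpow hM1 (by positivity)
  have b1 : ‖x - y‖ ≤ M ^ (1 / (2 * γ)) * ‖x - y‖ :=
    le_mul_of_one_le_left (norm_nonneg _) a1
  have b2 : ‖ξ - η‖ ≤ M ^ (1 / (2 * κ)) * ‖ξ - η‖ :=
    le_mul_of_one_le_left (norm_nonneg _) a2
  have n1 := norm_nonneg (x - y)
  have n2 := norm_nonneg (ξ - η)
  set D := 2 + M ^ (1 / (2 * γ)) * ‖x - y‖ + M ^ (1 / (2 * κ)) * ‖ξ - η‖ with hD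
  have hD1 : 1 ≤ D := by linarith
  have hD0 : 0 < D := by linarith
  have c1 := h₁ ξ η M D hM1 hD1 (by linarith) (by linarith)
  have c2 := h₂ x y M D hM1 hD1 (by linarith) (by linarith)
  have d1 : D ^ (2 * γ) ≤ D ^ (2 * κ + 2 * γ) :=
    Real.rpow_le_rpow_of_exponent_le hD1 (by linarith)
  have d2 : D ^ (2 * κ) ≤ D ^ (2 * κ + 2 * γ) :=
    Real.rpow_le_rpow_of_exponent_le hD1 (by linarith)
  have e : q + V y + A η ≤ (L₁ + L₂) * M * D ^ (2 * κ + 2 * γ) := by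
    have f1 : L₁ * M * D ^ (2 * γ) ≤ L₁ * M * D ^ (2 * κ + 2 * γ) := by gcongr
    have f2 : L₂ * M * D ^ (2 * κ) ≤ L₂ * M * D ^ (2 * κ + 2 * γ) := by gcongr
    linarith
  calc (q + V y + A η) ^ (1 / (2 * κ))
      ≤ ((L₁ + L₂) * M * D ^ (2 * κ + 2 * γ)) ^ (1 / (2 * κ)) :=
        Real.rpow_le_rpow (by linarith) e hp.le
    _ = (L₁ + L₂) ^ (1 / (2 * κ)) * M ^ (1 / (2 * κ)) *
          D ^ ((2 * κ + 2 * γ) * (1 / (2 * κ))) := by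
        rw [Real.mul_rpow (by positivity) (by positivity),
          Real.mul_rpow (by positivity) hM0.le, ← Real.rpow_mul hD0.le]
    _ ≤ _ := by
        gcongr
        rw [← Real.rpow_natCast]
        exact Real.rpow_le_rpow_of_exponent_le hD1 (Nat.le_ceil _)
end
end

section
/- Let κ>0, q>0, and let V: ℝⁿ → ℝ be a κ-function with parameter q such that q/2+V(x) ≥ 1 for all x ∈ ℝⁿ. Then there exists a constant C > 0 such that for all x, y ∈ ℝⁿ: (q/2+V(y))^{1/(2κ)} ≤ C·(1+|x−y|)·(q/2+V(x))^{1/(2κ)}. -/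
open MeasureTheory
noncomputable section

/-- for a κ-function V with q/2 + V ≥ 1, the quantity (q/2+V(y))^{1/(2κ)}
is controlled by C(1+|x−y|)(q/2+V(x))^{1/(2κ)}. -/
theorem statement5 {n : ℕ} (hn : 1 ≤ n) (κ q : ℝ) (hκ : 0 < κ) (hq : 0 < q)
    (V : E n → ℝ) (hV : IsTauFunction κ q V) (hV1 : ∀ x : E n, 1 ≤ q / 2 + V x) :
    ∃ C > (0:ℝ), ∀ x y : E n,
      (q / 2 + V y) ^ (1 / (2 * κ)) ≤
        C * (1 + ‖x - y‖) * (q / 2 + V x) ^ (1 / (2 * κ)) := by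
  obtain ⟨hc, -, C₁, hC₁, R, hR, hL⟩ := hV
  set f : E n → ℝ := fun x => (q / 2 + V x) ^ (1 / (2 * κ)) with hf
  have hfc : Continuous f := by
    refine Continuous.rpow_const (continuous_const.add hc) ?_
    intro x
    left
    linarith [hV1 x]
  have hf1 : ∀ x, 1 ≤ f x := fun x => Real.one_le_rpow (hV1 x) (by positivity)
  obtain ⟨M, hM⟩ := (isCompact_closedBall (0 : E n) R).bddAbove_image hfc.continuousOn
  have hM' : ∀ x : E n, ‖x‖ ≤ R → f x ≤ M := fun x hx =>
    hM ⟨x, by simpa using hx, rfl⟩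
  have hM1 : 1 ≤ M := (hf1 0).trans (hM' 0 (by simpa using hR.le))
  have hLip : ∀ x y : E n, R ≤ ‖x‖ → R ≤ ‖y‖ → f y ≤ f x + C₁⁻¹ * ‖x - y‖ := by
    intro x y hx hy
    have h : C₁ * |f x - f y| ≤ ‖x - y‖ := hL x y hx hy
    have h2 : |f x - f y| ≤ C₁⁻¹ * ‖x - y‖ := by
      rw [inv_mul_eq_div, le_div_iff₀ hC₁]
      linarith
    linarith [neg_abs_le (f x - f y)]
  have hi : 0 < C₁⁻¹ := inv_pos.mpr hC₁
  refine ⟨M + C₁⁻¹, by positivity, fun x y => ?_⟩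
  change f y ≤ (M + C₁⁻¹) * (1 + ‖x - y‖) * f x
  have hd := norm_nonneg (x - y)
  have hx1 := hf1 x
  have key : f y ≤ M * f x + C₁⁻¹ * ‖x - y‖ := by
    have hMx : M ≤ M * f x := by nlinarith
    have hMx' : f x ≤ M * f x := by nlinarith
    have hid : 0 ≤ C₁⁻¹ * ‖x - y‖ := by positivity
    rcases le_total ‖y‖ R with hy | hy
    · linarith [hM' y hy]
    rcases le_total R ‖x‖ with hx | hx
    · linarith [hLip x y hx hy]
    have hy0 : 0 < ‖y‖ := hR.trans_le hy
    have hz : ‖(R / ‖y‖) • y‖ = R := by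
      rw [norm_smul, Real.norm_of_nonneg (by positivity)]
      field_simp
    have hzy : ‖(R / ‖y‖) • y - y‖ ≤ ‖x - y‖ := by
      have e : (R / ‖y‖) • y - y = (-(1 - R / ‖y‖)) • y := by
        module
      have h0 : 0 ≤ 1 - R / ‖y‖ := by
        rw [sub_nonneg, div_le_one hy0]; exact hy
      rw [e, norm_smul, norm_neg, Real.norm_of_nonneg h0]
      have e2 : (1 - R / ‖y‖) * ‖y‖ = ‖y‖ - R := by field_simp
      rw [e2]
      have := norm_sub_norm_le y x
      rw [norm_sub_rev] at this
      linarith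
    have h1 := hLip _ y hz.ge hy
    have h2 := hM' _ hz.le
    have h3 := mul_le_mul_of_nonneg_left hzy hi.le
    linarith
  have h4 : 0 ≤ M * (‖x - y‖ * f x) := by positivity
  have h5 : C₁⁻¹ * ‖x - y‖ ≤ C₁⁻¹ * ‖x - y‖ * f x :=
    le_mul_of_one_le_right (by positivity) hx1
  have h6 : 0 ≤ C₁⁻¹ * f x := by positivity
  nlinarith
end
end

section
/- Let A, V, q, M, g, g^σ be as in the context. Then M(x,ξ) = q+V(x)+A(ξ) is a g^{(A,V)}-weight; explicitly: (1) (g-continuity) there exists C̃ > 0 such that for all X=(x,ξ), Y=(y,η) ∈ ℝⁿ×ℝⁿ, if g_X(X−Y) ≤ 1/C̃ then C̃^{-1}·M(Y) ≤ M(X) ≤ C̃·M(Y); and (2) (g-temperateness) there exist C̃ > 0 and an integer N ≥ 1 such that for all X, Y, both M(X) ≤ C̃·M(Y)·(1+g^σ_Y(X−Y))^N and M(Y) ≤ C̃·M(X)·(1+g^σ_Y(X−Y))^N hold. -/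
open MeasureTheory RealInnerProductSpace
noncomputable section

theorem tau_L1 {n : ℕ} (hn : 1 ≤ n) {τ q : ℝ} (hτ : 0 < τ) (hq : 0 < q) {Γ : E n → ℝ}
    (h : IsTauFunction τ q Γ) :
    ∃ C > (0:ℝ), ∀ x y : E n, (q / 2 + Γ x) ^ (1 / (2 * τ)) ≤
      C * ((q / 2 + Γ y) ^ (1 / (2 * τ)) + ‖x - y‖) := by
  obtain ⟨hc, hp, C₁, hC₁, R, hR, hL⟩ := h
  have ha : 0 < 1 / (2 * τ) := by positivity
  set a := 1 / (2 * τ) with hadef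
  have hF : Continuous fun x => (q / 2 + Γ x) ^ a :=
    (continuous_const.add hc).rpow_const (fun x => Or.inr ha.le)
  obtain ⟨B, hB⟩ := (isCompact_closedBall (0 : E n) R).exists_bound_of_continuousOn hF.continuousOn
  have hB' : ∀ x : E n, ‖x‖ ≤ R → (q / 2 + Γ x) ^ a ≤ B := fun x hx =>
    (le_abs_self _).trans (hB x (by simpa using hx))
  have hc0 : 0 < (q / 4) ^ a := by positivity
  set c := (q / 4) ^ a
  have hlow : ∀ y : E n, c ≤ (q / 2 + Γ y) ^ a := fun y =>
    Real.rpow_le_rpow (by positivity) (by linarith [hp y]) ha.le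
  have hB0 : 0 < B := hc0.trans_le ((hlow 0).trans (hB' 0 (by simpa using hR.le)))
  obtain ⟨x0, hx0⟩ : ∃ x0 : E n, ‖x0‖ = R := by
    refine ⟨EuclideanSpace.single ⟨0, hn⟩ R, ?_⟩
    simp [abs_of_pos hR]
  have key : ∀ x y : E n, (q / 2 + Γ x) ^ a ≤
      (q / 2 + Γ y) ^ a + ‖x - y‖ / C₁ + (B + 2 * R / C₁) := by
    intro x y
    have h1 : 0 ≤ ‖x - y‖ / C₁ := by positivity
    have h2 : 0 ≤ 2 * R / C₁ := by positivity
    have h3 := hlow y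
    rcases le_total ‖x‖ R with hx | hx
    · linarith [hB' x hx]
    rcases le_total ‖y‖ R with hy | hy
    · have h4 := hL x x0 hx hx0.ge
      have h5 : ‖x - x0‖ ≤ ‖x - y‖ + 2 * R := by
        have e : x - x0 = (x - y) + (y - x0) := by abel
        rw [e]
        linarith [norm_add_le (x - y) (y - x0), norm_sub_le y x0]
      have h6 : |(q / 2 + Γ x) ^ a - (q / 2 + Γ x0) ^ a| ≤ (‖x - y‖ + 2 * R) / C₁ := by
        rw [le_div_iff₀ hC₁]; linarith
      rw [add_div] at h6
      linarith [le_abs_self ((q / 2 + Γ x) ^ a - (q / 2 + Γ x0) ^ a), hB' x0 hx0.le]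
    · have h4 := hL x y hx hy
      have h6 : |(q / 2 + Γ x) ^ a - (q / 2 + Γ y) ^ a| ≤ ‖x - y‖ / C₁ := by
        rw [le_div_iff₀ hC₁]; linarith
      linarith [le_abs_self ((q / 2 + Γ x) ^ a - (q / 2 + Γ y) ^ a)]
  have hD : 0 < (B + 2 * R / C₁) := by positivity
  set D := B + 2 * R / C₁
  refine ⟨1 + 1 / C₁ + D / c, by positivity, fun x y => (key x y).trans ?_⟩
  have h3 := hlow y
  have h0 : 0 ≤ ‖x - y‖ := norm_nonneg _
  have h7 : D ≤ D / c * (q / 2 + Γ y) ^ a := by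
    rw [div_mul_eq_mul_div, le_div_iff₀ hc0]; gcongr
  have h8 : 0 ≤ 1 / C₁ * (q / 2 + Γ y) ^ a :=
    mul_nonneg (by positivity) (hc0.le.trans h3)
  have h9 : 0 ≤ D / c * ‖x - y‖ := by positivity
  have h10 : ‖x - y‖ / C₁ = 1 / C₁ * ‖x - y‖ := by ring
  rw [h10]
  nlinarith

theorem rpow_inv_aux {τ u w : ℝ} (hτ : 0 < τ) (hu : 0 < u)
    (h : u ^ (1 / (2 * τ)) ≤ w) : u ≤ w ^ (2 * τ) := by
  have h2 : (u ^ (1 / (2 * τ))) ^ (2 * τ) ≤ w ^ (2 * τ) :=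
    Real.rpow_le_rpow (by positivity) h (by positivity)
  rwa [← Real.rpow_mul hu.le, one_div_mul_cancel (by positivity), Real.rpow_one] at h2

theorem rpow_inv_aux2 {τ u : ℝ} (hτ : 0 < τ) (hu : 0 < u) :
    (u ^ (1 / (2 * τ))) ^ (2 * τ) = u := by
  rw [← Real.rpow_mul hu.le, one_div_mul_cancel (by positivity), Real.rpow_one]

theorem tau_L2 {n : ℕ} (hn : 1 ≤ n) {τ q : ℝ} (hτ : 0 < τ) (hq : 0 < q) {Γ : E n → ℝ}
    (h : IsTauFunction τ q Γ) :
    ∃ D > (0:ℝ), ∀ (x y : E n) (M t : ℝ), 1 ≤ t → q / 2 + Γ y ≤ M →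
      ‖x - y‖ ≤ t * M ^ (1 / (2 * τ)) → q / 2 + Γ x ≤ D * t ^ (2 * τ) * M := by
  obtain ⟨C, hC, hL⟩ := tau_L1 hn hτ hq h
  refine ⟨(2 * C) ^ (2 * τ), by positivity, fun x y M t ht hM hxy => ?_⟩
  have hy : 0 < q / 2 + Γ y := by linarith [h.2.1 y]
  have hx : 0 < q / 2 + Γ x := by linarith [h.2.1 x]
  have hM0 : 0 < M := hy.trans_le hM
  have h1 : (q / 2 + Γ y) ^ (1 / (2 * τ)) ≤ t * M ^ (1 / (2 * τ)) := by
    have : (q / 2 + Γ y) ^ (1 / (2 * τ)) ≤ M ^ (1 / (2 * τ)) :=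
      Real.rpow_le_rpow hy.le hM (by positivity)
    have h0 : 0 ≤ M ^ (1 / (2 * τ)) := by positivity
    nlinarith
  have h2 : (q / 2 + Γ x) ^ (1 / (2 * τ)) ≤ 2 * C * t * M ^ (1 / (2 * τ)) := by
    refine (hL x y).trans ?_
    have := mul_le_mul_of_nonneg_left (add_le_add h1 hxy) hC.le
    linarith
  have h3 := rpow_inv_aux hτ hx h2
  rwa [Real.mul_rpow (by positivity) (by positivity), Real.mul_rpow (by positivity) (by positivity),
    rpow_inv_aux2 hτ hM0] at h3

theorem tau_L3 {n : ℕ} (hn : 1 ≤ n) {τ q : ℝ} (hτ : 0 < τ) (hq : 0 < q) {Γ : E n → ℝ}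
    (h : IsTauFunction τ q Γ) :
    ∃ D > (0:ℝ), ∃ ε > (0:ℝ), ∀ (x y : E n) (M : ℝ), 0 < M → M ≤ 2 * (q / 2 + Γ x) →
      ‖x - y‖ ≤ ε * M ^ (1 / (2 * τ)) → M ≤ D * (q / 2 + Γ y) := by
  obtain ⟨C, hC, hL⟩ := tau_L1 hn hτ hq h
  have hb : (0:ℝ) < 2 ^ (1 / (2 * τ)) := by positivity
  set b : ℝ := 2 ^ (1 / (2 * τ))
  refine ⟨(2 * b * C) ^ (2 * τ), by positivity, 1 / (2 * b * C), by positivity,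
    fun x y M hM0 hM hxy => ?_⟩
  have hy : 0 < q / 2 + Γ y := by linarith [h.2.1 y]
  have hx : 0 < q / 2 + Γ x := by linarith [h.2.1 x]
  have h1 : M ^ (1 / (2 * τ)) ≤ b * (q / 2 + Γ x) ^ (1 / (2 * τ)) := by
    rw [← Real.mul_rpow (by norm_num) hx.le]
    exact Real.rpow_le_rpow hM0.le hM (by positivity)
  have h2 : b * (q / 2 + Γ x) ^ (1 / (2 * τ)) ≤
      b * (C * ((q / 2 + Γ y) ^ (1 / (2 * τ)) + 1 / (2 * b * C) * M ^ (1 / (2 * τ)))) := by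
    gcongr
    refine (hL x y).trans ?_
    gcongr
  have h3 : b * (C * ((q / 2 + Γ y) ^ (1 / (2 * τ)) + 1 / (2 * b * C) * M ^ (1 / (2 * τ)))) =
      b * C * (q / 2 + Γ y) ^ (1 / (2 * τ)) + M ^ (1 / (2 * τ)) / 2 := by
    field_simp
  have h4 : M ^ (1 / (2 * τ)) ≤ 2 * b * C * (q / 2 + Γ y) ^ (1 / (2 * τ)) := by linarith
  have h5 := rpow_inv_aux hτ hM0 h4
  rwa [Real.mul_rpow (by positivity) (by positivity), rpow_inv_aux2 hτ hy] at h5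

theorem tau_L4 {κ t M ε : ℝ} (hκ : 0 < κ) (hM : 0 < M) (hε : 0 < ε)
    (h : t ^ 2 * M ^ (-(1 / κ)) ≤ ε ^ 2) : t ≤ ε * M ^ (1 / (2 * κ)) := by
  refine abs_le_of_sq_le_sq' ?_ (by positivity) |>.2
  have e : (M ^ (1 / (2 * κ))) ^ 2 = M ^ (1 / κ) := by
    rw [← Real.rpow_natCast, ← Real.rpow_mul hM.le]
    congr 1
    push_cast
    field_simp
  rw [mul_pow, e]
  rw [Real.rpow_neg hM.le, ← div_eq_mul_inv, div_le_iff₀ (by positivity)] at h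
  exact h

theorem tau_L5 {τ S t M : ℝ} {N : ℕ} (hS : 0 ≤ S) (hM : 1 ≤ M) (hτ : 0 < τ) (hN : τ ≤ N)
    (h : t ^ 2 ≤ S) :
    1 ≤ Real.sqrt (1 + S) ∧ t ≤ Real.sqrt (1 + S) * M ^ (1 / (2 * τ)) ∧
      Real.sqrt (1 + S) ^ (2 * τ) ≤ (1 + S) ^ N := by
  have h1 : 1 ≤ Real.sqrt (1 + S) := Real.one_le_sqrt.mpr (by linarith)
  refine ⟨h1, ?_, ?_⟩
  · have h2 : t ≤ Real.sqrt (1 + S) := Real.le_sqrt_of_sq_le (by linarith)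
    have h3 : 1 ≤ M ^ (1 / (2 * τ)) := Real.one_le_rpow hM (by positivity)
    nlinarith
  · rw [Real.rpow_mul (by positivity), Real.rpow_two, Real.sq_sqrt (by linarith),
      ← Real.rpow_natCast]
    exact Real.rpow_le_rpow_of_exponent_le (by linarith) hN

/-- M(x,ξ) = q+V(x)+A(ξ) is a g^{(A,V)}-weight: it is g-continuous
and g-temperate. -/
theorem statement6 {n : ℕ} (hn : 1 ≤ n) (κ γ q : ℝ) (hκ : 0 < κ) (hγ : 0 < γ) (hq : 0 < q)
    (A V : E n → ℝ) (hA : IsTauFunction γ q A) (hV : IsTauFunction κ q V)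
    (hM : ∀ x ξ : E n, 1 ≤ q + V x + A ξ) :
    (∃ Ct > (0:ℝ), ∀ X Y : E n × E n,
      gMet κ γ q A V X (X - Y) ≤ 1 / Ct →
        Ct⁻¹ * (q + V Y.1 + A Y.2) ≤ q + V X.1 + A X.2 ∧
        q + V X.1 + A X.2 ≤ Ct * (q + V Y.1 + A Y.2)) ∧
    (∃ Ct > (0:ℝ), ∃ N : ℕ, 1 ≤ N ∧ ∀ X Y : E n × E n,
      q + V X.1 + A X.2 ≤
          Ct * (q + V Y.1 + A Y.2) * (1 + gSig κ γ q A V Y (X - Y)) ^ N ∧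
      q + V Y.1 + A Y.2 ≤
          Ct * (q + V X.1 + A X.2) * (1 + gSig κ γ q A V Y (X - Y)) ^ N) := by
  have hfV : ∀ x, 0 < q / 2 + V x := fun x => by linarith [hV.2.1 x]
  have hfA : ∀ x, 0 < q / 2 + A x := fun x => by linarith [hA.2.1 x]
  obtain ⟨D₁, hD₁, hV2⟩ := tau_L2 hn hκ hq hV
  obtain ⟨D₂, hD₂, hA2⟩ := tau_L2 hn hγ hq hA
  obtain ⟨D₃, hD₃, ε₁, hε₁, hV3⟩ := tau_L3 hn hκ hq hV
  obtain ⟨D₄, hD₄, ε₂, hε₂, hA3⟩ := tau_L3 hn hγ hq hA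
  constructor
  · obtain ⟨ε, hε, hεa, hεb, hεc⟩ : ∃ ε > (0:ℝ), ε ≤ ε₁ ∧ ε ≤ ε₂ ∧ ε ≤ 1 :=
      ⟨min ε₁ (min ε₂ 1), by positivity, min_le_left _ _,
        (min_le_right _ _).trans (min_le_left _ _), (min_le_right _ _).trans (min_le_right _ _)⟩
    refine ⟨D₁ + D₂ + D₃ + D₄ + 1 / ε ^ 2, by positivity, ?_⟩
    rintro ⟨x, ξ⟩ ⟨y, η⟩ hg
    have hCt : 0 < D₁ + D₂ + D₃ + D₄ + 1 / ε ^ 2 := by positivity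
    have hCt1 : D₁ + D₂ ≤ D₁ + D₂ + D₃ + D₄ + 1 / ε ^ 2 := by
      have : 0 < 1 / ε ^ 2 := by positivity
      linarith
    have hCt3 : D₃ + D₄ ≤ D₁ + D₂ + D₃ + D₄ + 1 / ε ^ 2 := by
      have : 0 < 1 / ε ^ 2 := by positivity
      linarith
    have hCt2 : 1 / (D₁ + D₂ + D₃ + D₄ + 1 / ε ^ 2) ≤ ε ^ 2 := by
      rw [div_le_comm₀ hCt (by positivity)]
      linarith
    generalize D₁ + D₂ + D₃ + D₄ + 1 / ε ^ 2 = Ct at *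
    simp only [gMet, Prod.fst_sub, Prod.snd_sub] at hg ⊢
    have hMX := hM x ξ
    have hMY := hM y η
    have hVx := hfV x
    have hVy := hfV y
    have hAx := hfA ξ
    have hAy := hfA η
    obtain ⟨m, hm⟩ : ∃ m, m = q + V x + A ξ := ⟨_, rfl⟩
    rw [← hm] at hg hMX ⊢
    have hm0 : 0 < m := by linarith
    have p1 : 0 ≤ ‖x - y‖ ^ 2 * m ^ (-(1 / κ)) := by positivity
    have p2 : 0 ≤ ‖ξ - η‖ ^ 2 * m ^ (-(1 / γ)) := by positivity
    have t1 : ‖x - y‖ ≤ ε * m ^ (1 / (2 * κ)) := tau_L4 hκ hm0 hε (by linarith)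
    have t2 : ‖ξ - η‖ ≤ ε * m ^ (1 / (2 * γ)) := tau_L4 hγ hm0 hε (by linarith)
    have r1 : 0 ≤ m ^ (1 / (2 * κ)) := by positivity
    have r2 : 0 ≤ m ^ (1 / (2 * γ)) := by positivity
    constructor
    · rw [inv_mul_le_iff₀ hCt]
      have a1 := hV2 y x m 1 le_rfl (by linarith) (by rw [norm_sub_rev]; exact t1.trans (mul_le_mul_of_nonneg_right hεc r1))
      have a2 := hA2 η ξ m 1 le_rfl (by linarith) (by rw [norm_sub_rev]; exact t2.trans (mul_le_mul_of_nonneg_right hεc r2))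
      rw [Real.one_rpow, mul_one] at a1 a2
      have a3 := mul_le_mul_of_nonneg_right hCt1 hm0.le
      linarith
    · rcases le_total (q / 2 + A ξ) (q / 2 + V x) with hc | hc
      · have := hV3 x y m hm0 (by linarith) (t1.trans (mul_le_mul_of_nonneg_right hεa r1))
        refine this.trans ?_
        exact mul_le_mul (by linarith) (by linarith) hVy.le hCt.le
      · have := hA3 ξ η m hm0 (by linarith) (t2.trans (mul_le_mul_of_nonneg_right hεb r2))
        refine this.trans ?_
        exact mul_le_mul (by linarith) (by linarith) hAy.le hCt.le
  · obtain ⟨N, hN⟩ := exists_nat_ge (max κ γ + 1)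
    have hN1 : κ ≤ N := by linarith [le_max_left κ γ]
    have hN2 : γ ≤ N := by linarith [le_max_right κ γ]
    refine ⟨D₁ + D₂, by positivity, N, ?_, ?_⟩
    · have : (1:ℝ) ≤ N := by linarith [le_max_left κ γ]
      exact_mod_cast this
    rintro ⟨x, ξ⟩ ⟨y, η⟩
    simp only [gSig, Prod.fst_sub, Prod.snd_sub]
    have hMX := hM x ξ
    have hMY := hM y η
    have hVx := hfV x
    have hVy := hfV y
    have hAx := hfA ξ
    have hAy := hfA η
    have s1 : 1 ≤ (q + V y + A η) ^ (1 / γ) := Real.one_le_rpow hMY (by positivity)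
    have s2 : 1 ≤ (q + V y + A η) ^ (1 / κ) := Real.one_le_rpow hMY (by positivity)
    have n1 : 0 ≤ ‖x - y‖ ^ 2 := by positivity
    have n2 : 0 ≤ ‖ξ - η‖ ^ 2 := by positivity
    obtain ⟨S, hS⟩ : ∃ S, S = ‖x - y‖ ^ 2 * (q + V y + A η) ^ (1 / γ) +
      ‖ξ - η‖ ^ 2 * (q + V y + A η) ^ (1 / κ) := ⟨_, rfl⟩
    rw [← hS]
    have hS1 : ‖x - y‖ ^ 2 ≤ S := by rw [hS]; nlinarith
    have hS2 : ‖ξ - η‖ ^ 2 ≤ S := by rw [hS]; nlinarith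
    have hS0 : 0 ≤ S := n1.trans hS1
    have fin : ∀ x ξ y η : E n, ‖x - y‖ ^ 2 ≤ S → ‖ξ - η‖ ^ 2 ≤ S →
        q + V x + A ξ ≤ (D₁ + D₂) * (q + V y + A η) * (1 + S) ^ N := by
      intro x ξ y η k1 k2
      have hm := hM y η
      have hVy := hfV y
      have hAy := hfA η
      obtain ⟨u1, u2, u3⟩ := tau_L5 hS0 hm hκ hN1 k1
      obtain ⟨v1, v2, v3⟩ := tau_L5 hS0 hm hγ hN2 k2
      have a1 := hV2 x y _ _ u1 (by linarith) u2
      have a2 := hA2 ξ η _ _ v1 (by linarith) v2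
      have b1 : D₁ * Real.sqrt (1 + S) ^ (2 * κ) * (q + V y + A η) ≤
          D₁ * (1 + S) ^ N * (q + V y + A η) := by gcongr
      have b2 : D₂ * Real.sqrt (1 + S) ^ (2 * γ) * (q + V y + A η) ≤
          D₂ * (1 + S) ^ N * (q + V y + A η) := by gcongr
      calc q + V x + A ξ = (q / 2 + V x) + (q / 2 + A ξ) := by ring
        _ ≤ D₁ * (1 + S) ^ N * (q + V y + A η) + D₂ * (1 + S) ^ N * (q + V y + A η) :=
          add_le_add (a1.trans b1) (a2.trans b2)
        _ = _ := by ring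
    exact ⟨fin x ξ y η hS1 hS2, fin y η x ξ (by rwa [norm_sub_rev]) (by rwa [norm_sub_rev])⟩
end
end

section
/- Let A, V, q, M, g be as in the context, and let m ∈ ℝ. For a smooth function a: ℝⁿ×ℝⁿ → ℂ the following two conditions are equivalent: (i) for every k ∈ ℕ there exists C_k > 0 such that for all X ∈ ℝⁿ×ℝⁿ and all directions T₁,…,T_k ∈ ℝⁿ×ℝⁿ, the k-th derivative satisfies |a^{(k)}(X; T₁,…,T_k)| ≤ C_k·M(X)^m·∏_{i=1}^{k} g_X(T_i)^{1/2} (i.e. a belongs to the Hörmander class S(λ_g^{m·2κγ/(κ+γ)}, g), where λ_g(X)^{2κγ/(κ+γ)} = M(X)); (ii) for all multi-indices α, β there exists C_{αβ} > 0 such that |∂_x^β ∂_ξ^α a(x,ξ)| ≤ C_{αβ}·M(x,ξ)^{m−|β|/(2κ)−|α|/(2γ)} for all x,ξ ∈ ℝⁿ (i.e. a belongs to the class Σ^m_{A,V}). -/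
open MeasureTheory
noncomputable section

/-- Iterated directional (partial) derivative of `f` along the list of directions `L`,
the head of the list being applied first (innermost). -/
noncomputable def iterPartial {F : Type*} [NormedAddCommGroup F] [NormedSpace ℝ F] :
    List F → (F → ℂ) → F → ℂ
  | [], f => f
  | v :: vs, f => iterPartial vs fun x => fderiv ℝ f x v

/-- The list of coordinate directions encoded by a multi-index `β`: direction `e i`
repeated `β i` times, for `i = 0, …, n-1`. -/
def mIdxDirs {n : ℕ} {F : Type*} (β : Fin n → ℕ) (e : Fin n → F) : List F :=
  (List.finRange n).foldr (fun i l => List.replicate (β i) (e i) ++ l) []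


section Helpers

variable {F : Type*} [NormedAddCommGroup F] [NormedSpace ℝ F]

lemma smooth_fderiv_apply {f : F → ℂ} (hf : ContDiff ℝ (⊤ : ℕ∞) f) (v : F) :
    ContDiff ℝ (⊤ : ℕ∞) (fun x => fderiv ℝ f x v) :=
  (hf.fderiv_right (by simp)).clm_apply contDiff_const

lemma iterPartial_perm {L L' : List F} (h : L.Perm L') :
    ∀ {f : F → ℂ}, ContDiff ℝ (⊤ : ℕ∞) f → iterPartial L f = iterPartial L' f := by
  induction h with
  | nil => intro f _; rfl
  | cons x _ ih => intro f hf; exact ih (smooth_fderiv_apply hf x)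
  | trans _ _ ih1 ih2 => intro f hf; exact (ih1 hf).trans (ih2 hf)
  | swap v w l =>
    intro f hf
    simp only [iterPartial]
    congr 1
    funext x
    have hd : DifferentiableAt ℝ (fderiv ℝ f) x :=
      ((hf.fderiv_right (m := (⊤ : ℕ∞)) (by simp)).differentiable (by simp)) x
    have hs : IsSymmSndFDerivAt ℝ f x :=
      hf.contDiffAt.isSymmSndFDerivAt (by
        rw [minSmoothness_of_isRCLikeNormedField]; exact WithTop.coe_le_coe.2 (le_top : (2 : ℕ∞) ≤ ⊤))
    have key : ∀ v w : F, fderiv ℝ (fun y => fderiv ℝ f y v) x w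
        = fderiv ℝ (fderiv ℝ f) x w v := by
      intro v w
      rw [fderiv_clm_apply hd (differentiableAt_const _)]
      simp
    rw [key, key, hs.eq]

lemma iterPartial_append (L L' : List F) :
    ∀ f : F → ℂ, iterPartial (L ++ L') f = iterPartial L' (iterPartial L f) := by
  induction L with
  | nil => intro f; rfl
  | cons v L ih => intro f; exact ih _

lemma iteratedFDeriv_eq_iterPartial {f : F → ℂ} (hf : ContDiff ℝ (⊤ : ℕ∞) f) :
    ∀ (k : ℕ) (x : F) (T : Fin k → F),
      iteratedFDeriv ℝ k f x T = iterPartial (List.ofFn T) f x := by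
  intro k
  induction k with
  | zero => intro x T; simp [iterPartial]
  | succ k ih =>
    intro x T
    have hd : DifferentiableAt ℝ (iteratedFDeriv ℝ k f) x :=
      (hf.differentiable_iteratedFDeriv (by exact_mod_cast WithTop.coe_lt_top k)) x
    rw [iteratedFDeriv_succ_apply_left,
      ← fderiv_continuousMultilinear_apply_const_apply hd, List.ofFn_succ]
    have hp : (T 0 :: List.ofFn fun i => T (Fin.succ i)).Perm
        ((List.ofFn fun i => T (Fin.succ i)) ++ [T 0]) :=
      (List.perm_append_singleton _ _).symm
    rw [iterPartial_perm hp hf, iterPartial_append]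
    simp only [iterPartial]
    congr 2
    funext y
    exact ih y _

end Helpers

lemma mIdxDirs_coe {n : ℕ} {F : Type*} (β : Fin n → ℕ) (e : Fin n → F) :
    ((mIdxDirs β e : List F) : Multiset F) = ∑ i, β i • ({e i} : Multiset F) := by
  have : ∀ l : List (Fin n),
      ((l.foldr (fun i l => List.replicate (β i) (e i) ++ l) [] : List F) : Multiset F)
        = (l.map fun i => β i • ({e i} : Multiset F)).sum := by
    intro l
    induction l with
    | nil => rfl
    | cons i l ih =>
      rw [List.foldr_cons, ← Multiset.coe_add, ih, List.map_cons, List.sum_cons,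
        Multiset.coe_replicate, Multiset.nsmul_singleton]
  rw [mIdxDirs, this, ← List.ofFn_eq_map, List.sum_ofFn]

lemma mIdxDirs_prod {n : ℕ} {F : Type*} (β : Fin n → ℕ) (e : Fin n → F) (h : F → ℝ) :
    ((mIdxDirs β e).map h).prod = ∏ i, h (e i) ^ β i := by
  have : ∀ l : List (Fin n),
      ((l.foldr (fun i l => List.replicate (β i) (e i) ++ l) [] : List F).map h).prod
        = (l.map fun i => h (e i) ^ β i).prod := by
    intro l
    induction l with
    | nil => rfl
    | cons i l ih =>
      rw [List.foldr_cons, List.map_append, List.prod_append, ih]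
      simp
  rw [mIdxDirs, this, ← List.ofFn_eq_map, List.prod_ofFn]

lemma sum_fiber_sum {n k : ℕ} {M : Type*} [AddCommMonoid M] (f : Fin k → Fin n ⊕ Fin n)
    (h : Fin n ⊕ Fin n → M) :
    ∑ j, h (f j) = ∑ i, (Finset.univ.filter fun j => f j = Sum.inr i).card • h (Sum.inr i)
      + ∑ i, (Finset.univ.filter fun j => f j = Sum.inl i).card • h (Sum.inl i) := by
  rw [← Finset.sum_fiberwise Finset.univ f, Fintype.sum_sum_type, add_comm]
  congr 1 <;>
  · refine Finset.sum_congr rfl fun i _ => ?_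
    rw [← Finset.sum_const]
    refine Finset.sum_congr rfl fun j hj => ?_
    rw [(Finset.mem_filter.1 hj).2]

lemma gMet_inl {n : ℕ} (κ γ q : ℝ) (A V : E n → ℝ) (X : E n × E n)
    (h : 1 ≤ q + V X.1 + A X.2) (i : Fin n) :
    gMet κ γ q A V X (EuclideanSpace.single i (1:ℝ), (0 : E n)) ^ ((1:ℝ)/2)
      = (q + V X.1 + A X.2) ^ (-(1 / (2 * κ))) := by
  simp only [gMet, EuclideanSpace.norm_single, norm_one, norm_zero]
  rw [one_pow, one_mul, zero_pow two_ne_zero, zero_mul, add_zero, ← Real.rpow_mul (by linarith)]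
  congr 1; rw [← div_div]; ring

lemma gMet_inr {n : ℕ} (κ γ q : ℝ) (A V : E n → ℝ) (X : E n × E n)
    (h : 1 ≤ q + V X.1 + A X.2) (i : Fin n) :
    gMet κ γ q A V X ((0 : E n), EuclideanSpace.single i (1:ℝ)) ^ ((1:ℝ)/2)
      = (q + V X.1 + A X.2) ^ (-(1 / (2 * γ))) := by
  simp only [gMet, EuclideanSpace.norm_single, norm_one, norm_zero]
  rw [one_pow, one_mul, zero_pow two_ne_zero, zero_mul, zero_add, ← Real.rpow_mul (by linarith)]
  congr 1; rw [← div_div]; ring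

lemma sq_half_le {t M p G : ℝ} (hM : 0 < M) (ht : 0 ≤ t)
    (hG : t ^ 2 * M ^ (-(1 / p)) ≤ G) : t * M ^ (-(1 / (2 * p))) ≤ G ^ ((1:ℝ)/2) := by
  have h2 : (t * M ^ (-(1 / (2 * p)))) ^ 2 = t ^ 2 * M ^ (-(1 / p)) := by
    rw [mul_pow, ← Real.rpow_natCast (M ^ _) 2, ← Real.rpow_mul hM.le]
    congr 2
    rw [← div_div]; push_cast; ring
  rw [← Real.sqrt_eq_rpow]
  exact Real.le_sqrt_of_sq_le (h2 ▸ hG)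

/-- coordinate directions -/
def cDir (n : ℕ) : Fin n ⊕ Fin n → E n × E n
  | Sum.inl i => (EuclideanSpace.single i (1:ℝ), (0 : E n))
  | Sum.inr i => ((0 : E n), EuclideanSpace.single i (1:ℝ))

/-- coordinates -/
def cCoord {n : ℕ} (T : E n × E n) : Fin n ⊕ Fin n → ℝ
  | Sum.inl i => T.1 i
  | Sum.inr i => T.2 i

/-- weights -/
def cWt {n : ℕ} (κ γ : ℝ) : Fin n ⊕ Fin n → ℝ
  | Sum.inl _ => 1 / (2 * κ)
  | Sum.inr _ => 1 / (2 * γ)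

lemma euc_expand {n : ℕ} (x : E n) : ∑ i, x i • EuclideanSpace.single i (1:ℝ) = x := by
  have := (EuclideanSpace.basisFun (Fin n) ℝ).sum_repr x
  simpa using this

lemma cExpand {n : ℕ} (T : E n × E n) : ∑ s, cCoord T s • cDir n s = T := by
  rw [Fintype.sum_sum_type]
  refine Prod.ext ?_ ?_
  · simp only [cCoord, cDir, Prod.fst_add, Prod.fst_sum, Prod.smul_fst, smul_zero,
      Finset.sum_const_zero, add_zero]
    exact euc_expand _
  · simp only [cCoord, cDir, Prod.snd_add, Prod.snd_sum, Prod.smul_snd, smul_zero,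
      Finset.sum_const_zero, zero_add]
    exact euc_expand _

lemma cCoord_le {n : ℕ} (κ γ q : ℝ) (A V : E n → ℝ) (X T : E n × E n)
    (h : 1 ≤ q + V X.1 + A X.2) (s : Fin n ⊕ Fin n) :
    |cCoord T s| * (q + V X.1 + A X.2) ^ (-(cWt κ γ s)) ≤
      gMet κ γ q A V X T ^ ((1:ℝ)/2) := by
  have hM : 0 < q + V X.1 + A X.2 := by linarith
  have hk := Real.rpow_pos_of_pos hM (-(1/κ))
  have hg := Real.rpow_pos_of_pos hM (-(1/γ))
  cases s with
  | inl i =>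
    refine sq_half_le hM (abs_nonneg _) ?_
    have : |T.1 i| ≤ ‖T.1‖ := PiLp.norm_apply_le T.1 i
    have h2 : |T.1 i| ^ 2 ≤ ‖T.1‖ ^ 2 := pow_le_pow_left₀ (abs_nonneg _) this 2
    have h3 : 0 ≤ ‖T.2‖ ^ 2 * (q + V X.1 + A X.2) ^ (-(1/γ)) := by positivity
    have := mul_le_mul_of_nonneg_right h2 hk.le
    simp only [gMet, cCoord]
    linarith
  | inr i =>
    refine sq_half_le hM (abs_nonneg _) ?_
    have : |T.2 i| ≤ ‖T.2‖ := PiLp.norm_apply_le T.2 i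
    have h2 : |T.2 i| ^ 2 ≤ ‖T.2‖ ^ 2 := pow_le_pow_left₀ (abs_nonneg _) this 2
    have h3 : 0 ≤ ‖T.1‖ ^ 2 * (q + V X.1 + A X.2) ^ (-(1/κ)) := by positivity
    have := mul_le_mul_of_nonneg_right h2 hg.le
    simp only [gMet, cCoord]
    linarith

lemma ofFn_cDir_perm {n k : ℕ} (f : Fin k → Fin n ⊕ Fin n) :
    (List.ofFn fun j => cDir n (f j)).Perm
      (mIdxDirs (fun i => (Finset.univ.filter fun j => f j = Sum.inr i).card)
          (fun i => ((0 : E n), EuclideanSpace.single i (1:ℝ))) ++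
        mIdxDirs (fun i => (Finset.univ.filter fun j => f j = Sum.inl i).card)
          (fun i => (EuclideanSpace.single i (1:ℝ), (0 : E n)))) := by
  rw [← Multiset.coe_eq_coe, ← Multiset.coe_add, mIdxDirs_coe, mIdxDirs_coe]
  have := sum_fiber_sum f (fun s => ({cDir n s} : Multiset (E n × E n)))
  simp only [cDir] at this
  rw [← this]
  have h2 : ∀ (k : ℕ) (g : Fin k → E n × E n),
      ((List.ofFn g : List _) : Multiset (E n × E n)) = ∑ j, {g j} := by
    intro k
    induction k with
    | zero => intro g; simp
    | succ k ih =>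
      intro g
      rw [List.ofFn_succ, Fin.sum_univ_succ, ← ih, Multiset.singleton_add, Multiset.cons_coe]
  rw [h2]
  rfl

/-- for a smooth symbol a on ℝⁿ×ℝⁿ, the Weyl–Hörmander estimates of the
class S(λ_g^{m·2κγ/(κ+γ)}, g) (with λ_g^{2κγ/(κ+γ)} = M = q+V+A), phrased via iterated
Fréchet derivatives, are equivalent to the multi-index estimates defining Σ^m_{A,V}:
|∂_x^β ∂_ξ^α a(x,ξ)| ≤ C_{αβ} M(x,ξ)^{m − |β|/(2κ) − |α|/(2γ)}. -/
theorem statement7 {n : ℕ} (hn : 1 ≤ n) (κ γ q m : ℝ) (hκ : 0 < κ) (hγ : 0 < γ)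
    (hq : 0 < q) (A V : E n → ℝ) (hA : IsTauFunction γ q A) (hV : IsTauFunction κ q V)
    (hM : ∀ x ξ : E n, 1 ≤ q + V x + A ξ)
    (a : E n × E n → ℂ) (ha : ContDiff ℝ (⊤ : ℕ∞) a) :
    (∀ k : ℕ, ∃ C > (0:ℝ), ∀ (X : E n × E n) (T : Fin k → E n × E n),
        ‖iteratedFDeriv ℝ k a X T‖ ≤
          C * (q + V X.1 + A X.2) ^ m *
            ∏ i, gMet κ γ q A V X (T i) ^ ((1:ℝ) / 2)) ↔
    (∀ α β : Fin n → ℕ, ∃ C > (0:ℝ), ∀ x ξ : E n,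
        ‖iterPartial
            (mIdxDirs α (fun i => ((0 : E n), EuclideanSpace.single i (1:ℝ))) ++
              mIdxDirs β (fun i => (EuclideanSpace.single i (1:ℝ), (0 : E n))))
            a (x, ξ)‖ ≤
          C * (q + V x + A ξ) ^
              (m - (∑ i, (β i : ℝ)) / (2 * κ) - (∑ i, (α i : ℝ)) / (2 * γ))) := by
  constructor
  · intro H α β
    set L := mIdxDirs α (fun i => ((0 : E n), EuclideanSpace.single i (1:ℝ))) ++
              mIdxDirs β (fun i => (EuclideanSpace.single i (1:ℝ), (0 : E n))) with hL
    obtain ⟨C, hC, hb⟩ := H L.length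
    refine ⟨C, hC, fun x ξ => ?_⟩
    have h1 := hb (x, ξ) L.get
    rw [iteratedFDeriv_eq_iterPartial ha, List.ofFn_get] at h1
    refine h1.trans (le_of_eq ?_)
    have hM1 := hM x ξ
    have hM0 : 0 < q + V x + A ξ := by linarith
    have h2 : ∏ i, gMet κ γ q A V (x, ξ) (L.get i) ^ ((1:ℝ) / 2)
        = (L.map fun T => gMet κ γ q A V (x, ξ) T ^ ((1:ℝ) / 2)).prod := by
      conv_rhs => rw [← List.ofFn_get L, List.map_ofFn, List.prod_ofFn]
      rfl
    rw [h2, hL, List.map_append, List.prod_append, mIdxDirs_prod, mIdxDirs_prod]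
    simp only [gMet_inl κ γ q A V (x, ξ) hM1, gMet_inr κ γ q A V (x, ξ) hM1]
    rw [Finset.prod_pow_eq_pow_sum, Finset.prod_pow_eq_pow_sum, mul_assoc,
      ← Real.rpow_natCast, ← Real.rpow_natCast, ← Real.rpow_mul hM0.le, ← Real.rpow_mul hM0.le,
      ← Real.rpow_add hM0, ← Real.rpow_add hM0]
    congr 2
    push_cast
    ring
  · intro H k
    choose C hC hb using H
    let Cf : (Fin k → Fin n ⊕ Fin n) → ℝ := fun f =>
      C (fun i => (Finset.univ.filter fun j => f j = Sum.inr i).card)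
        (fun i => (Finset.univ.filter fun j => f j = Sum.inl i).card)
    have hCf : ∀ f, 0 < Cf f := fun f => hC _ _
    have hS : 0 ≤ ∑ f, Cf f := Finset.sum_nonneg fun f _ => (hCf f).le
    refine ⟨∑ f, Cf f + 1, by linarith, fun X T => ?_⟩
    have hM1 := hM X.1 X.2
    have hM0 : 0 < q + V X.1 + A X.2 := by linarith
    have hPn : ∀ T, 0 ≤ gMet κ γ q A V X T ^ ((1:ℝ) / 2) := by
      intro T
      apply Real.rpow_nonneg
      unfold gMet
      positivity
    have hP : 0 ≤ ∏ i, gMet κ γ q A V X (T i) ^ ((1:ℝ) / 2) :=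
      Finset.prod_nonneg fun i _ => hPn _
    have hMm : 0 < (q + V X.1 + A X.2) ^ m := Real.rpow_pos_of_pos hM0 m
    have hexp : iteratedFDeriv ℝ k a X T = ∑ f : Fin k → Fin n ⊕ Fin n,
        (∏ j, cCoord (T j) (f j)) • iteratedFDeriv ℝ k a X (fun j => cDir n (f j)) := by
      have h0 : T = fun j => ∑ s, cCoord (T j) s • cDir n s := by
        funext j; rw [cExpand]
      conv_lhs => rw [h0]
      rw [ContinuousMultilinearMap.map_sum]
      refine Finset.sum_congr rfl fun f _ => ?_
      rw [ContinuousMultilinearMap.map_smul_univ]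
    have hterm : ∀ f : Fin k → Fin n ⊕ Fin n,
        ‖(∏ j, cCoord (T j) (f j)) • iteratedFDeriv ℝ k a X (fun j => cDir n (f j))‖ ≤
        Cf f * ((q + V X.1 + A X.2) ^ m * ∏ i, gMet κ γ q A V X (T i) ^ ((1:ℝ) / 2)) := by
      intro f
      rw [norm_smul, iteratedFDeriv_eq_iterPartial ha, iterPartial_perm (ofFn_cDir_perm f) ha,
        norm_prod]
      have h1 := hb (fun i => (Finset.univ.filter fun j => f j = Sum.inr i).card)
        (fun i => (Finset.univ.filter fun j => f j = Sum.inl i).card) X.1 X.2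
      have hw := sum_fiber_sum f (fun s => cWt κ γ s)
      simp only [cWt, nsmul_eq_mul, ← Finset.sum_mul] at hw
      have hpow : (q + V X.1 + A X.2) ^
          (m - (∑ i, ((Finset.univ.filter fun j => f j = Sum.inl i).card : ℝ)) / (2 * κ)
            - (∑ i, ((Finset.univ.filter fun j => f j = Sum.inr i).card : ℝ)) / (2 * γ))
          = (q + V X.1 + A X.2) ^ m * ∏ j, (q + V X.1 + A X.2) ^ (-(cWt κ γ (f j))) := by
        rw [← Real.rpow_sum_of_pos hM0, ← Real.rpow_add hM0, Finset.sum_neg_distrib]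
        congr 1
        have hw' : ∑ j, cWt κ γ (f j) = _ := hw
        rw [hw']
        ring
      rw [hpow] at h1
      refine (mul_le_mul_of_nonneg_left h1 (Finset.prod_nonneg fun j _ => norm_nonneg _)).trans ?_
      have h3 : ∏ j, (|cCoord (T j) (f j)| * (q + V X.1 + A X.2) ^ (-(cWt κ γ (f j)))) ≤
          ∏ i, gMet κ γ q A V X (T i) ^ ((1:ℝ) / 2) :=
        Finset.prod_le_prod (fun j _ => mul_nonneg (abs_nonneg _) (Real.rpow_nonneg hM0.le _))
          (fun j _ => cCoord_le κ γ q A V X (T j) hM1 (f j))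
      rw [Finset.prod_mul_distrib] at h3
      have h4 := mul_le_mul_of_nonneg_left h3 (mul_nonneg (hCf f).le hMm.le)
      simp only [Real.norm_eq_abs]
      calc _ = _ := by ring
        _ ≤ _ := h4
        _ = _ := by ring
    rw [hexp]
    refine (norm_sum_le _ _).trans ((Finset.sum_le_sum fun f _ => hterm f).trans ?_)
    rw [← Finset.sum_mul, mul_assoc]
    exact mul_le_mul_of_nonneg_right (by linarith) (mul_nonneg hMm.le hP)
end
end

section
/- Let n ≥ 1, κ, γ > 0, let A, V: ℝⁿ → ℝ be continuous, and let q > 0 be such that q+V(x)+A(ξ) ≥ 1 for all x, ξ ∈ ℝⁿ. Assume condition (C*): there exist constants C₁, C₂ > 0 such that A(ξ) ≥ C₁·|ξ|^{2γ} for all |ξ| ≥ C₂ and V(x) ≥ C₁·|x|^{2κ} for all |x| ≥ C₂. Then for every μ > n(κ+γ)/(2κγ), the integral 𝓘_μ := ∫_{ℝⁿ}∫_{ℝⁿ} (q+A(ξ)+V(x))^{-μ} dx dξ is finite. -/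
open MeasureTheory
noncomputable section

theorem aux_bound {n : ℕ} (f : E n → ℝ) (p C₁ C₂ K : ℝ) (hp : 0 < p) (hC₁ : 0 < C₁)
    (hf : ∀ x : E n, C₂ ≤ ‖x‖ → C₁ * ‖x‖ ^ p ≤ f x) :
    ∃ D : ℝ, 0 < D ∧ ∀ (x : E n) (s : ℝ), 1 ≤ s → f x - K ≤ s → (1 + ‖x‖) ^ p ≤ D * s := by
  set R := max C₂ 1 with hR
  have hR1 : 1 ≤ R := le_max_right _ _
  have h1 : 0 < (1 + R) ^ p := Real.rpow_pos_of_pos (by linarith) _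
  have h2 : 0 < (2:ℝ) ^ p := Real.rpow_pos_of_pos (by norm_num) _
  have hK := abs_nonneg K
  have h3 : 0 < (2:ℝ) ^ p * ((1 + |K|) / C₁) := by positivity
  refine ⟨(1 + R) ^ p + 2 ^ p * ((1 + |K|) / C₁), by linarith, fun x s hs hx => ?_⟩
  have hx0 := norm_nonneg x
  rcases le_total R ‖x‖ with h | h
  · have h4 := hf x ((le_max_left _ _).trans h)
    have h5 : ‖x‖ ^ p ≤ (1 + |K|) / C₁ * s := by
      rw [div_mul_eq_mul_div, le_div_iff₀ hC₁]
      nlinarith [le_abs_self K]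
    calc (1 + ‖x‖) ^ p ≤ (2 * ‖x‖) ^ p :=
          Real.rpow_le_rpow (by linarith) (by linarith) hp.le
      _ = 2 ^ p * ‖x‖ ^ p := Real.mul_rpow (by norm_num) hx0
      _ ≤ 2 ^ p * ((1 + |K|) / C₁ * s) := by gcongr
      _ ≤ _ := by nlinarith
  · calc (1 + ‖x‖) ^ p ≤ (1 + R) ^ p :=
          Real.rpow_le_rpow (by linarith) (by linarith) hp.le
      _ ≤ _ := by nlinarith

theorem aux_neg {D s t p a : ℝ} (hD : 0 < D) (hs : 1 ≤ s) (ht : 0 < t) (ha : 0 < a)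
    (h : t ^ p ≤ D * s) : s ^ (-a) ≤ D ^ a * t ^ (-(p * a)) := by
  have h0 : 0 < t ^ p := Real.rpow_pos_of_pos ht _
  have h1 : (D * s) ^ (-a) ≤ (t ^ p) ^ (-a) :=
    Real.rpow_le_rpow_of_nonpos h0 h (by linarith)
  rw [Real.mul_rpow hD.le (by linarith), ← Real.rpow_mul ht.le, mul_neg] at h1
  have h2 : 0 < D ^ a := Real.rpow_pos_of_pos hD _
  calc s ^ (-a) = D ^ a * (D ^ (-a) * s ^ (-a)) := by
        rw [Real.rpow_neg hD.le]; field_simp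
    _ ≤ _ := by gcongr

/-- under condition (C*) (power lower bounds for A and V at infinity),
for every μ > n(κ+γ)/(2κγ) the integral ∫∫ (q+A(ξ)+V(x))^{-μ} dx dξ is finite. -/
theorem statement10 {n : ℕ} (hn : 1 ≤ n) (κ γ q : ℝ) (hκ : 0 < κ) (hγ : 0 < γ)
    (hq : 0 < q) (A V : E n → ℝ) (hA : Continuous A) (hV : Continuous V)
    (hM : ∀ x ξ : E n, 1 ≤ q + V x + A ξ)
    (C₁ C₂ : ℝ) (hC₁ : 0 < C₁) (hC₂ : 0 < C₂)
    (hAlow : ∀ ξ : E n, C₂ ≤ ‖ξ‖ → C₁ * ‖ξ‖ ^ (2 * γ) ≤ A ξ)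
    (hVlow : ∀ x : E n, C₂ ≤ ‖x‖ → C₁ * ‖x‖ ^ (2 * κ) ≤ V x) :
    ∀ μ : ℝ, n * (κ + γ) / (2 * κ * γ) < μ →
      Integrable (fun p : E n × E n => (q + A p.2 + V p.1) ^ (-μ)) := by
  intro μ hμ
  have hμ' : n / (2 * κ) + n / (2 * γ) < μ := by
    refine lt_of_eq_of_lt ?_ hμ
    field_simp
    ring
  obtain ⟨e, he, hsum⟩ : ∃ e : ℝ, 0 < e ∧ μ = (n / (2 * κ) + e) + (n / (2 * γ) + e) :=
    ⟨(μ - (n / (2 * κ) + n / (2 * γ))) / 2, by linarith, by ring⟩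
  set a : ℝ := n / (2 * κ) + e with ha
  set b : ℝ := n / (2 * γ) + e with hb
  have ha0 : 0 < a := by positivity
  have hb0 : 0 < b := by positivity
  have han : (n : ℝ) < 2 * κ * a := by
    have : 2 * κ * a = n + 2 * κ * e := by rw [ha]; field_simp
    rw [this]; have : 0 < 2 * κ * e := by positivity
    linarith
  have hbn : (n : ℝ) < 2 * γ * b := by
    have : 2 * γ * b = n + 2 * γ * e := by rw [hb]; field_simp
    rw [this]; have : 0 < 2 * γ * e := by positivity
    linarith
  obtain ⟨D, hD, hDb⟩ := aux_bound V (2 * κ) C₁ C₂ (V 0) (by positivity) hC₁ hVlow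
  obtain ⟨F, hF, hFb⟩ := aux_bound A (2 * γ) C₁ C₂ (A 0) (by positivity) hC₁ hAlow
  have i1 : Integrable (fun x : E n => D ^ a * (1 + ‖x‖) ^ (-(2 * κ * a))) :=
    (integrable_one_add_norm (by simpa using han)).const_mul _
  have i2 : Integrable (fun x : E n => F ^ b * (1 + ‖x‖) ^ (-(2 * γ * b))) :=
    (integrable_one_add_norm (by simpa using hbn)).const_mul _
  have i3 := i1.mul_prod i2
  refine Integrable.mono' i3 ?_ (Filter.Eventually.of_forall fun p => ?_)
  · refine Continuous.aestronglyMeasurable ?_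
    refine Continuous.rpow_const (by fun_prop) fun p => Or.inl ?_
    have := hM p.1 p.2
    intro h; linarith
  · obtain ⟨x, ξ⟩ := p
    have h1 := hM x ξ
    have h2 := hM 0 ξ
    have h3 := hM x 0
    have hs : 1 ≤ q + A ξ + V x := by linarith
    have e1 := aux_neg hD hs (by positivity) ha0 (hDb x _ hs (by linarith))
    have e2 := aux_neg hF hs (by positivity) hb0 (hFb ξ _ hs (by linarith))
    have hs0 : 0 < q + A ξ + V x := by linarith
    simp only
    rw [Real.norm_of_nonneg (Real.rpow_nonneg hs0.le _), hsum, neg_add, Real.rpow_add hs0]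
    exact mul_le_mul e1 e2 (Real.rpow_nonneg hs0.le _) (by positivity)
end
end

section
/- Let n ≥ 1 and κ, γ, μ > 0. The integral ∫_{ℝⁿ}∫_{ℝⁿ} (1+|x|^{2κ}+|ξ|^{2γ})^{-μ} dx dξ is finite if and only if μ > n(κ+γ)/(2κγ). -/
open MeasureTheory
noncomputable section

/-- ∫∫ (1+|x|^{2κ}+|ξ|^{2γ})^{-μ} dx dξ < ∞ iff μ > n(κ+γ)/(2κγ). -/
theorem statement11 {n : ℕ} (hn : 1 ≤ n) (κ γ μ : ℝ) (hκ : 0 < κ) (hγ : 0 < γ)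
    (hμ : 0 < μ) :
    Integrable (fun p : E n × E n => (1 + ‖p.1‖ ^ (2 * κ) + ‖p.2‖ ^ (2 * γ)) ^ (-μ)) ↔
      n * (κ + γ) / (2 * κ * γ) < μ := by
  have hs : n * (κ + γ) / (2 * κ * γ) = n / (2 * κ) + n / (2 * γ) := by
    field_simp
    ring
  rw [hs]
  have hmeas : Measurable (fun p : E n × E n =>
      (1 + ‖p.1‖ ^ (2 * κ) + ‖p.2‖ ^ (2 * γ)) ^ (-μ)) := by fun_prop
  constructor
  · intro hf
    by_contra! hle
    set s : ℝ := n / (2 * κ) + n / (2 * γ) with hs'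
    set a : ℝ := 2 ^ (1 / (2 * κ)) with ha
    set b : ℝ := 2 ^ (1 / (2 * γ)) with hb
    have ha0 : 0 < a := by positivity
    have hb0 : 0 < b := by positivity
    have haκ : a ^ (2 * κ) = 2 := by
      rw [ha, ← Real.rpow_mul (by norm_num)]
      rw [one_div_mul_cancel (by positivity), Real.rpow_one]
    have hbγ : b ^ (2 * γ) = 2 := by
      rw [hb, ← Real.rpow_mul (by norm_num)]
      rw [one_div_mul_cancel (by positivity), Real.rpow_one]
    have hab : a ^ n * b ^ n = 2 ^ s := by
      rw [ha, hb, ← Real.rpow_natCast, ← Real.rpow_natCast, ← Real.rpow_mul (by norm_num),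
        ← Real.rpow_mul (by norm_num), ← Real.rpow_add (by norm_num), hs']
      congr 1
      ring
    let T : E n × E n → E n × E n := Prod.map (fun x => a • x) (fun x => b • x)
    have hTm : Measurable T := by fun_prop
    have hmap : Measure.map T (volume : Measure (E n × E n))
        = ENNReal.ofReal ((2 ^ s)⁻¹) • (volume : Measure (E n × E n)) := by
      rw [Measure.volume_eq_prod, ← Measure.map_prod_map _ _ (by fun_prop) (by fun_prop),
        Measure.map_addHaar_smul _ ha0.ne', Measure.map_addHaar_smul _ hb0.ne',
        Measure.prod_smul_left, Measure.prod_smul_right, smul_smul,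
        ← ENNReal.ofReal_mul (abs_nonneg _)]
      congr 2
      rw [finrank_euclideanSpace, Fintype.card_fin, abs_of_pos (by positivity),
        abs_of_pos (by positivity), ← mul_inv, hab]
    set f : E n × E n → ℝ := fun p => (1 + ‖p.1‖ ^ (2 * κ) + ‖p.2‖ ^ (2 * γ)) ^ (-μ) with hfd
    have h2s : (0 : ℝ) < 2 ^ s := by positivity
    have hfT : Integrable (fun p => f (T p)) := by
      have : Integrable f (Measure.map T volume) := by
        rw [hmap]
        exact hf.smul_measure ENNReal.ofReal_ne_top
      exact this.comp_measurable hTm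
    have hint : ∫ p, f (T p) = (2 ^ s)⁻¹ * ∫ p, f p := by
      rw [← integral_map hTm.aemeasurable hmeas.aestronglyMeasurable, hmap,
        integral_smul_measure, ENNReal.toReal_ofReal (by positivity), smul_eq_mul]
    have hlt : ∀ p, f p < 2 ^ s * f (T p) := by
      intro p
      have h1 : f (T p) = (1 + 2 * ‖p.1‖ ^ (2 * κ) + 2 * ‖p.2‖ ^ (2 * γ)) ^ (-μ) := by
        simp only [hfd, T, Prod.map, norm_smul, Real.norm_of_nonneg ha0.le,
          Real.norm_of_nonneg hb0.le]
        rw [Real.mul_rpow ha0.le (norm_nonneg _), Real.mul_rpow hb0.le (norm_nonneg _), haκ, hbγ]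
      have hX : 0 ≤ ‖p.1‖ ^ (2 * κ) := by positivity
      have hY : 0 ≤ ‖p.2‖ ^ (2 * γ) := by positivity
      have h2 : (2:ℝ) ^ μ * f (T p) ≤ 2 ^ s * f (T p) := by
        have : (2:ℝ) ^ μ ≤ 2 ^ s := Real.rpow_le_rpow_of_exponent_le (by norm_num) hle
        have h0 : 0 ≤ f (T p) := by rw [h1]; positivity
        gcongr
      refine lt_of_lt_of_le ?_ h2
      have h3 : (2:ℝ) ^ μ = (1/2 : ℝ) ^ (-μ) := by
        rw [one_div, Real.inv_rpow (by norm_num), Real.rpow_neg (by norm_num), inv_inv]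
      rw [h1, h3, ← Real.mul_rpow (by norm_num) (by positivity)]
      simp only [hfd]
      apply Real.rpow_lt_rpow_of_neg (by positivity) _ (by linarith)
      linarith
    have hg : ∫ p, (2 ^ s * f (T p) - f p) = 0 := by
      rw [integral_sub (hfT.const_mul _) hf, integral_const_mul, hint,
        mul_inv_cancel_left₀ h2s.ne', sub_self]
    rw [integral_eq_zero_iff_of_nonneg (fun p => (sub_pos.2 (hlt p)).le)
      ((hfT.const_mul _).sub hf)] at hg
    obtain ⟨p, hp⟩ := hg.exists
    have := hlt p
    simp only [Pi.zero_apply] at hp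
    linarith
  · intro h
    obtain ⟨a, ha1, ha2⟩ : ∃ a, (n / (2 * κ) : ℝ) < a ∧ a < μ - n / (2 * γ) :=
      exists_between (by linarith)
    have key : ∀ (κ a : ℝ), 0 < κ → (n / (2 * κ) : ℝ) < a →
        Integrable (fun x : E n => (1 + ‖x‖ ^ (2 * κ)) ^ (-a)) := by
      intro κ a hκ ha
      have ha0 : 0 < a := lt_of_le_of_lt (by positivity) ha
      have hr : (Module.finrank ℝ (E n) : ℝ) < 2 * κ * a := by
        rw [finrank_euclideanSpace, Fintype.card_fin]
        rwa [div_lt_iff₀' (by positivity)] at ha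
      have h0 := (integrable_one_add_norm (μ := (volume : Measure (E n))) hr).const_mul
        (((2:ℝ) ^ (-(2 * κ))) ^ (-a))
      refine h0.mono' (Measurable.aestronglyMeasurable (by fun_prop))
        (Filter.Eventually.of_forall fun x => ?_)
      rw [Real.norm_of_nonneg (by positivity)]
      have e : (1 + ‖x‖) ^ (-(2 * κ * a)) = ((1 + ‖x‖) ^ (2 * κ)) ^ (-a) := by
        rw [← Real.rpow_mul (by positivity)]
        congr 1
        ring
      rw [e, ← Real.mul_rpow (by positivity) (by positivity)]
      apply Real.rpow_le_rpow_of_nonpos (by positivity) _ (by linarith)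
      rw [Real.rpow_neg (by norm_num), inv_mul_le_iff₀ (by positivity)]
      rcases le_total ‖x‖ 1 with hx | hx
      · have h1 : (1 + ‖x‖) ^ (2 * κ) ≤ 2 ^ (2 * κ) :=
          Real.rpow_le_rpow (by positivity) (by linarith) (by positivity)
        have h2 : 0 ≤ ‖x‖ ^ (2 * κ) := by positivity
        have h3 : (0:ℝ) < 2 ^ (2 * κ) := by positivity
        nlinarith
      · have h1 : (1 + ‖x‖) ^ (2 * κ) ≤ (2 * ‖x‖) ^ (2 * κ) :=
          Real.rpow_le_rpow (by positivity) (by linarith) (by positivity)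
        rw [Real.mul_rpow (by norm_num) (by positivity)] at h1
        have h3 : (0:ℝ) < 2 ^ (2 * κ) := by positivity
        nlinarith
    have ha0 : 0 < a := lt_of_le_of_lt (by positivity) ha1
    have hb1 : (n / (2 * γ) : ℝ) < μ - a := by linarith
    have hb0 : 0 < μ - a := lt_of_le_of_lt (by positivity) hb1
    have hP := (key κ a hκ ha1).mul_prod (key γ (μ - a) hγ hb1)
    refine Integrable.mono' hP hmeas.aestronglyMeasurable
      (Filter.Eventually.of_forall fun p => ?_)
    have hX : 0 ≤ ‖p.1‖ ^ (2 * κ) := by positivity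
    have hY : 0 ≤ ‖p.2‖ ^ (2 * γ) := by positivity
    rw [Real.norm_of_nonneg (by positivity)]
    have e : -μ = -a + -(μ - a) := by ring
    rw [e, Real.rpow_add (by positivity)]
    apply mul_le_mul
    · exact Real.rpow_le_rpow_of_nonpos (by positivity) (by linarith) (by linarith)
    · exact Real.rpow_le_rpow_of_nonpos (by positivity) (by linarith) (by linarith)
    · positivity
    · positivity
end
end
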